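/- arXiv:math/0204198 — 6 statements merged into one kernel-verified Lean document; each statement's English description precedes it below -/
import Mathlib

section
/- Let z ∈ ℝⁿ have pairwise distinct coordinates and consider the map w : ℝⁿ → ℝⁿ, w_i(z) = m_i⁻¹ ∑_{j≠i} m_{ij} |z_i − z_j|^α (z_i − z_j), defined near z. Then w is differentiable at z and for every v ∈ ℝⁿ, ∑_{i=1}^n m_i v_i · (dw_z(v))_i = (α+1) · ∑_{i<j} m_{ij} |z_i − z_j|^α (v_i − v_j)². In particular, if α < −1 and m_{ij} > 0 for all i < j, this quantity is strictly negative for every v whose coordinates are not all equal. -/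
/-!
The function `t ↦ |t|^α t` has derivative `(α+1)|t|^α` at every `t ≠ 0`, so the chain rule gives
`m_i (dw_z(v))_i = (α+1) ∑_{j≠i} m_{ij} |z_i - z_j|^α (v_i - v_j)` (`hasDerivAt_abs_rpow_mul_self`).
The weights `m_{ij} |z_i - z_j|^α` are symmetric in `i` and `j`, so after pairing with `v` the
terms for `(i, j)` and `(j, i)` combine into a square (`sum_mul_sum_ne_eq_sum_lt_sq`).
If the weights are positive and `v` is not constant, that sum of squares is positive, and the
factor `α + 1 < 0` makes the form negative.
-/

theorem hasDerivAt_abs_rpow_mul_self (α : ℝ) {t : ℝ} (ht : t ≠ 0) :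
    HasDerivAt (fun t : ℝ => |t| ^ α * t) ((α + 1) * |t| ^ α) t := by
  have h := ((hasDerivAt_abs ht).rpow_const (p := α) (Or.inl (abs_ne_zero.2 ht))).mul
    (hasDerivAt_id t)
  refine h.congr_deriv ?_
  have h1 : |t| ^ (α - 1) * |t| = |t| ^ α := by
    rw [Real.rpow_sub_one (abs_ne_zero.2 ht)]
    field_simp
  have h2 : ((SignType.sign t : SignType) : ℝ) * t = |t| := sign_mul_self t
  simp only [id]
  linear_combination α * |t| ^ (α - 1) * h2 + α * h1

/-- Symmetrization: pairing the weighted differences `v i - v j` with `v` gives the weighted sum of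
squares over unordered pairs. -/
theorem sum_mul_sum_ne_eq_sum_lt_sq {n : ℕ} (f : Fin n → Fin n → ℝ)
    (hf : ∀ i j, i ≠ j → f i j = f j i) (v : Fin n → ℝ) :
    ∑ i, v i * ∑ j ∈ Finset.univ.filter (fun j => j ≠ i), f i j * (v i - v j) =
      ∑ i, ∑ j ∈ Finset.univ.filter (fun j => i < j), f i j * (v i - v j) ^ 2 := by
  simp only [Finset.mul_sum]
  simp only [Finset.sum_filter]
  have hsplit : ∀ i j : Fin n, (if j ≠ i then v i * (f i j * (v i - v j)) else 0) =
      (if i < j then v i * (f i j * (v i - v j)) else 0) +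
      (if j < i then v i * (f i j * (v i - v j)) else 0) := by
    intro i j
    rcases lt_trichotomy i j with h | h | h
    · simp [h, h.ne', h.not_gt]
    · simp [h]
    · simp [h, h.ne, h.not_gt]
  simp only [hsplit, Finset.sum_add_distrib]
  rw [Finset.sum_comm (f := fun i j => if j < i then v i * (f i j * (v i - v j)) else 0)]
  simp only [← Finset.sum_add_distrib]
  refine Finset.sum_congr rfl fun i _ => Finset.sum_congr rfl fun j _ => ?_
  split_ifs with h
  · rw [hf j i h.ne']
    ring
  · simp

/-- For `z ∈ ℝⁿ` with pairwise distinct coordinates, the map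
`w : ℝⁿ → ℝⁿ`, `w_i(z) = m_i⁻¹ ∑_{j≠i} m_{ij} |z_i - z_j|^α (z_i - z_j)`,
is differentiable at `z` with
`∑ i, m_i v_i (dw_z(v))_i = (α+1) ∑_{i<j} m_{ij} |z_i - z_j|^α (v_i - v_j)²`;
in particular, if `α < -1` and `m_{ij} > 0` for `i < j`, this quantity is
strictly negative whenever the coordinates of `v` are not all equal. -/
theorem stmt7 (n : ℕ) (hn : 3 ≤ n) (m : Fin n → ℝ) (hm : ∀ i, 0 < m i)
    (M : Fin n → Fin n → ℝ) (hsym : ∀ i j, i ≠ j → M i j = M j i) (α : ℝ)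
    (z : Fin n → ℝ) (hz : ∀ i j, i ≠ j → z i ≠ z j) :
    ∃ L : (Fin n → ℝ) →L[ℝ] (Fin n → ℝ),
      HasFDerivAt (fun z : Fin n → ℝ => fun i =>
          (m i)⁻¹ * ∑ j ∈ Finset.univ.filter (fun j => j ≠ i),
            M i j * |z i - z j| ^ α * (z i - z j)) L z ∧
      (∀ v : Fin n → ℝ,
        ∑ i, m i * v i * L v i =
          (α + 1) * ∑ i, ∑ j ∈ Finset.univ.filter (fun j => i < j),
            M i j * |z i - z j| ^ α * (v i - v j) ^ 2) ∧
      (α < -1 → (∀ i j, i < j → 0 < M i j) →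
        ∀ v : Fin n → ℝ, (∃ i j, v i ≠ v j) →
          ∑ i, m i * v i * L v i < 0) := by
  -- The differential of `w` at `z`, written coordinate by coordinate.
  let L : (Fin n → ℝ) →L[ℝ] (Fin n → ℝ) := ContinuousLinearMap.pi fun i =>
    (m i)⁻¹ • ∑ j ∈ Finset.univ.filter (fun j => j ≠ i),
      M i j • (((α + 1) * |z i - z j| ^ α) •
        (ContinuousLinearMap.proj (R := ℝ) (φ := fun _ : Fin n => ℝ) i -
          ContinuousLinearMap.proj (R := ℝ) (φ := fun _ : Fin n => ℝ) j))
  have hform : ∀ v : Fin n → ℝ,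
      ∑ i, m i * v i * L v i =
        (α + 1) * ∑ i, ∑ j ∈ Finset.univ.filter (fun j => i < j),
          M i j * |z i - z j| ^ α * (v i - v j) ^ 2 := by
    intro v
    rw [← sum_mul_sum_ne_eq_sum_lt_sq (fun i j => M i j * |z i - z j| ^ α)
      (fun i j hij => by simp only [hsym i j hij, abs_sub_comm (z i)]) v, Finset.mul_sum]
    refine Finset.sum_congr rfl fun i _ => ?_
    have hL : L v i = (m i)⁻¹ * ((α + 1) * ∑ j ∈ Finset.univ.filter (fun j => j ≠ i),
        M i j * |z i - z j| ^ α * (v i - v j)) := by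
      simp only [L, ContinuousLinearMap.coe_pi', smul_apply,
        sum_apply, ContinuousLinearMap.sub_apply,
        ContinuousLinearMap.proj_apply, smul_eq_mul]
      rw [Finset.mul_sum (a := α + 1)]
      congr 1
      exact Finset.sum_congr rfl fun j _ => by ring
    rw [hL]
    have := (hm i).ne'
    field_simp
  refine ⟨L, ?_, hform, ?_⟩
  · rw [hasFDerivAt_pi]
    intro i
    refine HasFDerivAt.const_mul (HasFDerivAt.fun_sum fun j hj => ?_) _
    have hij : z i - z j ≠ 0 :=
      sub_ne_zero.2 (hz i j (Finset.mem_filter.1 hj).2.symm)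
    have hsub : HasFDerivAt (fun y : Fin n → ℝ => y i - y j)
        (ContinuousLinearMap.proj (R := ℝ) (φ := fun _ : Fin n => ℝ) i -
          ContinuousLinearMap.proj (R := ℝ) (φ := fun _ : Fin n => ℝ) j) z :=
      (hasFDerivAt_apply i z).sub (hasFDerivAt_apply j z)
    have h := ((hasDerivAt_abs_rpow_mul_self α hij).comp_hasFDerivAt z hsub).const_mul (M i j)
    simpa only [Function.comp_def, mul_assoc] using h
  · intro hα hM v hv
    rw [hform]
    refine mul_neg_of_neg_of_pos (by linarith) ?_
    have hw : ∀ i j, i < j → 0 < M i j * |z i - z j| ^ α := fun i j hij =>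
      mul_pos (hM i j hij)
        (Real.rpow_pos_of_pos (abs_pos.2 (sub_ne_zero.2 (hz i j hij.ne))) α)
    have hnn : ∀ i, ∀ j ∈ Finset.univ.filter (fun j => i < j),
        0 ≤ M i j * |z i - z j| ^ α * (v i - v j) ^ 2 := fun i j hj =>
      mul_nonneg (hw i j (Finset.mem_filter.1 hj).2).le (sq_nonneg _)
    obtain ⟨i, j, hij, hne⟩ : ∃ i j, i < j ∧ v i ≠ v j := by
      obtain ⟨i, j, hne⟩ := hv
      rcases lt_trichotomy i j with h | h | h
      · exact ⟨i, j, h, hne⟩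
      · exact absurd (congrArg v h) hne
      · exact ⟨j, i, h, hne.symm⟩
    refine Finset.sum_pos' (fun i _ => Finset.sum_nonneg (hnn i)) ⟨i, Finset.mem_univ i, ?_⟩
    refine Finset.sum_pos' (hnn i) ⟨j, by simpa using hij, ?_⟩
    have := sub_ne_zero.2 hne
    exact mul_pos (hw i j hij) (by positivity)
end

section
/- Suppose α < −1 and m_{ij} > 0 for all i ≠ j. Then every normalized collinear central configuration is an isolated point of the set of normalized collinear central configurations; that is, if z ∈ ℝⁿ lies in the set S = { z ∈ ℝⁿ : the z_i are pairwise distinct, ∑_i m_i z_i = 0, ∑_i m_i z_i² = 1, and there is a real λ ≠ 0 with w_i(z) = λ z_i for all i }, then z has a neighborhood in ℝⁿ meeting S only in z. -/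
/-!
Two normalized configurations with the same ordering of coordinates coincide, and the configurations
ordered as `z` form a neighborhood of `z`.

Write `f x = |x| ^ α * x` and `w_i = (m i)⁻¹ * ∑ j, M i j * f (z i - z j)`. Since `f` is odd and `M`
is symmetric, pairing with a vector `u` gives
`2 * ∑ i, m i * w_i * u i = ∑ i, ∑ j, M i j * f (z i - z j) * (u i - u j)` (`two_mul_sum_antisymm`).

* With `u = z` the left side is `2 * λ` and the right side is nonnegative, so `λ > 0`.
* Let `y` be another configuration with the same ordering and multiplier `μ`. Because `α + 1 < 0`,
  `f` is decreasing on each half-line (`kernel_mul_sub_nonpos`), so pairing `λ z - μ y` with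
  `u = z - y` gives `∑ i, m i * (λ * z i - μ * y i) * (z i - y i) ≤ 0`. As `z` and `y` both have
  unit norm for the weights `m`, the left side equals `(λ + μ) / 2 * ∑ i, m i * (z i - y i) ^ 2`.
  Hence `z = y`.
-/

/-- Symmetrization of the pairing of the row sums of an antisymmetric array with a vector. -/
theorem two_mul_sum_antisymm {n : ℕ} (G : Fin n → Fin n → ℝ) (hG : ∀ i j, G i j = -G j i)
    (u : Fin n → ℝ) :
    2 * ∑ i, (∑ j, G i j) * u i = ∑ i, ∑ j, G i j * (u i - u j) := by
  have h1 : ∑ i, (∑ j, G i j) * u i = ∑ i, ∑ j, G i j * u i :=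
    Finset.sum_congr rfl fun i _ => Finset.sum_mul _ _ _
  have h2 : ∑ i, ∑ j, G i j * u j = -∑ i, ∑ j, G i j * u i := by
    rw [Finset.sum_comm, ← Finset.sum_neg_distrib]
    refine Finset.sum_congr rfl fun i _ => ?_
    rw [← Finset.sum_neg_distrib]
    refine Finset.sum_congr rfl fun j _ => ?_
    rw [hG j i]; ring
  simp only [mul_sub, Finset.sum_sub_distrib]
  rw [h2, h1]; ring

theorem kernel_mul_sub_nonpos_of_pos {α : ℝ} (hα : α < -1) {x y : ℝ} (hx : 0 < x) (hy : 0 < y) :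
    (|x| ^ α * x - |y| ^ α * y) * (x - y) ≤ 0 := by
  have key : ∀ t : ℝ, 0 < t → |t| ^ α * t = t ^ (α + 1) := fun t ht => by
    rw [abs_of_pos ht, Real.rpow_add ht, Real.rpow_one]
  rw [key x hx, key y hy]
  rcases le_total x y with h | h
  · have := Real.rpow_le_rpow_of_nonpos hx h (by linarith : α + 1 ≤ 0)
    exact mul_nonpos_of_nonneg_of_nonpos (by linarith) (by linarith)
  · have := Real.rpow_le_rpow_of_nonpos hy h (by linarith : α + 1 ≤ 0)
    exact mul_nonpos_of_nonpos_of_nonneg (by linarith) (by linarith)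

/-- For `α < -1`, `x ↦ |x| ^ α * x` is antitone on each open half-line. -/
theorem kernel_mul_sub_nonpos {α : ℝ} (hα : α < -1) {x y : ℝ}
    (h : (0 < x ∧ 0 < y) ∨ (x < 0 ∧ y < 0)) :
    (|x| ^ α * x - |y| ^ α * y) * (x - y) ≤ 0 := by
  rcases h with ⟨hx, hy⟩ | ⟨hx, hy⟩
  · exact kernel_mul_sub_nonpos_of_pos hα hx hy
  · have := kernel_mul_sub_nonpos_of_pos hα (neg_pos.2 hx) (neg_pos.2 hy)
    rw [abs_neg, abs_neg] at this
    linarith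

theorem kernel_antisymm {n : ℕ} {M : Fin n → Fin n → ℝ} (hsym : ∀ i j, i ≠ j → M i j = M j i)
    (α : ℝ) (z : Fin n → ℝ) (i j : Fin n) :
    M i j * |z i - z j| ^ α * (z i - z j) = -(M j i * |z j - z i| ^ α * (z j - z i)) := by
  rcases eq_or_ne i j with rfl | hij
  · simp
  · rw [hsym i j hij, abs_sub_comm]; ring

/-- The equation of a central configuration, cleared of `(m i)⁻¹` and with the vanishing diagonal
term included in the sum. -/
theorem central_eq {n : ℕ} {m : Fin n → ℝ} (hm : ∀ i, 0 < m i) {M : Fin n → Fin n → ℝ}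
    {α lam : ℝ} {z : Fin n → ℝ}
    (h : ∀ i, (m i)⁻¹ * ∑ j ∈ Finset.univ.filter (fun j => j ≠ i),
      M i j * |z i - z j| ^ α * (z i - z j) = lam * z i) (i : Fin n) :
    ∑ j, M i j * |z i - z j| ^ α * (z i - z j) = m i * (lam * z i) := by
  rw [← h i, mul_inv_cancel_left₀ (hm i).ne']
  symm
  apply Finset.sum_subset (Finset.filter_subset _ _)
  intro j _ hj
  have : j = i := by simpa using hj
  subst this
  simp

theorem multiplier_nonneg {n : ℕ} {m : Fin n → ℝ} {M : Fin n → Fin n → ℝ}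
    (hsym : ∀ i j, i ≠ j → M i j = M j i) (hM : ∀ i j, i ≠ j → 0 < M i j) {α lam : ℝ}
    {z : Fin n → ℝ} (hz : ∑ i, m i * z i ^ 2 = 1)
    (h : ∀ i, ∑ j, M i j * |z i - z j| ^ α * (z i - z j) = m i * (lam * z i)) : 0 ≤ lam := by
  have h1 := two_mul_sum_antisymm _ (kernel_antisymm hsym α z) z
  have h2 : ∑ i, (∑ j, M i j * |z i - z j| ^ α * (z i - z j)) * z i = lam := by
    calc _ = ∑ i, lam * (m i * z i ^ 2) :=
          Finset.sum_congr rfl fun i _ => by rw [h i]; ring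
      _ = lam := by rw [← Finset.mul_sum, hz, mul_one]
  have h3 : 0 ≤ ∑ i, ∑ j, M i j * |z i - z j| ^ α * (z i - z j) * (z i - z j) := by
    refine Finset.sum_nonneg fun i _ => Finset.sum_nonneg fun j _ => ?_
    rcases eq_or_ne i j with rfl | hij
    · simp
    · rw [mul_assoc]
      exact mul_nonneg (mul_nonneg (hM i j hij).le (Real.rpow_nonneg (abs_nonneg _) _))
        (mul_self_nonneg _)
  linarith

/-- Two normalized solutions with positive multipliers and the same ordering are equal. -/
theorem eq_of_same_order {n : ℕ} {m : Fin n → ℝ} (hm : ∀ i, 0 < m i) {M : Fin n → Fin n → ℝ}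
    (hsym : ∀ i j, i ≠ j → M i j = M j i) (hM : ∀ i j, i ≠ j → 0 < M i j)
    {α : ℝ} (hα : α < -1) {lam mu : ℝ} (hlam : 0 < lam) (hmu : 0 < mu) {z y : Fin n → ℝ}
    (hz : ∑ i, m i * z i ^ 2 = 1) (hy : ∑ i, m i * y i ^ 2 = 1)
    (hinj : ∀ i j, i ≠ j → z i ≠ z j) (hord : ∀ i j, z i < z j → y i < y j)
    (hzc : ∀ i, ∑ j, M i j * |z i - z j| ^ α * (z i - z j) = m i * (lam * z i))
    (hyc : ∀ i, ∑ j, M i j * |y i - y j| ^ α * (y i - y j) = m i * (mu * y i)) : y = z := by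
  have h1 := two_mul_sum_antisymm
    (fun i j => M i j * |z i - z j| ^ α * (z i - z j) - M i j * |y i - y j| ^ α * (y i - y j))
    (fun i j => by rw [kernel_antisymm hsym α z i j, kernel_antisymm hsym α y i j]; ring)
    (fun i => z i - y i)
  have h2 : ∑ i, ∑ j, (M i j * |z i - z j| ^ α * (z i - z j)
      - M i j * |y i - y j| ^ α * (y i - y j)) * ((z i - y i) - (z j - y j)) ≤ 0 := by
    refine Finset.sum_nonpos fun i _ => Finset.sum_nonpos fun j _ => ?_
    rcases eq_or_ne i j with rfl | hij
    · simp
    · have hs : (0 < z i - z j ∧ 0 < y i - y j) ∨ (z i - z j < 0 ∧ y i - y j < 0) := by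
        rcases lt_or_gt_of_ne (hinj i j hij) with h | h
        · exact Or.inr ⟨sub_neg.2 h, sub_neg.2 (hord i j h)⟩
        · exact Or.inl ⟨sub_pos.2 h, sub_pos.2 (hord j i h)⟩
      have := mul_nonpos_of_nonneg_of_nonpos (hM i j hij).le (kernel_mul_sub_nonpos hα hs)
      calc _ = _ := by ring
        _ ≤ 0 := this
  -- Both norms are `1`, which turns the pairing into a multiple of `‖z - y‖²`.
  have h3 : 2 * ∑ i, (∑ j, (M i j * |z i - z j| ^ α * (z i - z j)
      - M i j * |y i - y j| ^ α * (y i - y j))) * (z i - y i)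
      = (lam + mu) * ∑ i, m i * (z i - y i) ^ 2 := by
    have e : ∀ i, 2 * ((∑ j, (M i j * |z i - z j| ^ α * (z i - z j)
        - M i j * |y i - y j| ^ α * (y i - y j))) * (z i - y i))
        = (lam + mu) * (m i * (z i - y i) ^ 2) + (lam - mu) * (m i * z i ^ 2)
          - (lam - mu) * (m i * y i ^ 2) := fun i => by
      rw [Finset.sum_sub_distrib, hzc, hyc]; ring
    rw [Finset.mul_sum, Finset.sum_congr rfl fun i _ => e i, Finset.sum_sub_distrib,
      Finset.sum_add_distrib, ← Finset.mul_sum, ← Finset.mul_sum, ← Finset.mul_sum, hz, hy]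
    ring
  have hnn : ∀ i ∈ Finset.univ, 0 ≤ m i * (z i - y i) ^ 2 := fun i _ =>
    mul_nonneg (hm i).le (sq_nonneg _)
  have h4 : ∑ i, m i * (z i - y i) ^ 2 = 0 := by
    refine le_antisymm ?_ (Finset.sum_nonneg hnn)
    have : (lam + mu) * ∑ i, m i * (z i - y i) ^ 2 ≤ 0 := by
      rw [← h3, h1]; exact h2
    exact nonpos_of_mul_nonpos_right this (by linarith)
  funext i
  have := (Finset.sum_eq_zero_iff_of_nonneg hnn).1 h4 i (Finset.mem_univ i)
  have := pow_eq_zero_iff (two_ne_zero) |>.1 ((mul_eq_zero.1 this).resolve_left (hm i).ne')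
  linarith

/-- For `α < -1` and `m_{ij} > 0` for all `i ≠ j`, every normalized
collinear central configuration is an isolated point of the set of normalized
collinear central configurations. -/
theorem stmt9 (n : ℕ) (hn : 3 ≤ n) (m : Fin n → ℝ) (hm : ∀ i, 0 < m i)
    (M : Fin n → Fin n → ℝ) (hsym : ∀ i j, i ≠ j → M i j = M j i)
    (α : ℝ) (hα : α < -1) (hM : ∀ i j, i ≠ j → 0 < M i j)
    (S : Set (Fin n → ℝ))
    (hS : S = {z : Fin n → ℝ |
      (∀ i j, i ≠ j → z i ≠ z j) ∧
      (∑ i, m i * z i = 0) ∧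
      (∑ i, m i * z i ^ 2 = 1) ∧
      ∃ lam : ℝ, lam ≠ 0 ∧ ∀ i,
        (m i)⁻¹ * ∑ j ∈ Finset.univ.filter (fun j => j ≠ i),
          M i j * |z i - z j| ^ α * (z i - z j) = lam * z i}) :
    ∀ z ∈ S, ∃ U : Set (Fin n → ℝ), U ∈ nhds z ∧ U ∩ S = {z} := by
  subst hS
  rintro z ⟨hinj, hz0, hz, lam, hlam, hzc⟩
  have hzc' := central_eq hm hzc
  have hlam' := lt_of_le_of_ne (multiplier_nonneg hsym hM hz hzc') hlam.symm
  refine ⟨{y | ∀ i j, z i < z j → y i < y j}, ?_, ?_⟩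
  · refine Filter.eventually_all.2 fun i => Filter.eventually_all.2 fun j => ?_
    by_cases h : z i < z j
    · filter_upwards [(continuous_apply i).continuousAt.eventually_lt
        (continuous_apply j).continuousAt h]
        with y hy _ using hy
    · exact Filter.Eventually.of_forall fun y h' => absurd h' h
  · refine Set.Subset.antisymm ?_ ?_
    · rintro y ⟨hord, -, -, hy, mu, hmu, hyc⟩
      have hyc' := central_eq hm hyc
      have hmu' := lt_of_le_of_ne (multiplier_nonneg hsym hM hy hyc') hmu.symm
      exact eq_of_same_order hm hsym hM hα hlam' hmu' hz hy hinj hord hzc' hyc'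
    · rintro _ rfl
      exact ⟨fun _ _ h => h, hinj, hz0, hz, lam, hlam, hzc⟩
end

section
/- (Generalized Moulton theorem, ordered form.) Suppose α < −1 and m_{ij} > 0 for all i ≠ j. Then for every permutation σ of {1,…,n} there exists exactly one z ∈ ℝⁿ such that z_{σ(1)} < z_{σ(2)} < … < z_{σ(n)}, ∑_i m_i z_i = 0, ∑_i m_i z_i² = 1, and there exists a real λ ≠ 0 with w_i(z) = λ z_i for all i. -/
/-!
Write `p = α + 1 < 0`, so that the force between two bodies at distance `d` is `M i j * d ^ p`,
a positive decreasing function of `d`.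

*Uniqueness.* If `x`, `y` are normalized configurations with the same ordering and multipliers
`lam`, `mu`, then pairing `w(x) - w(y)` with `x - y` in the mass inner product gives a sum of terms
`M i j * (|a| ^ α * a - |b| ^ α * b) * (a - b)` with `a = x i - x j` and `b = y i - y j` of equal
sign, hence a nonpositive number (`pairing_nonpos`). The same pairing equals
`(lam + mu) * (1 - ⟨x, y⟩)`. Since multipliers are positive (`multiplier_pos`), `⟨x, y⟩ ≥ 1`, which
forces `x = y` for unit vectors.

*Existence.* After relabelling, the ordering is the identity. The force `d ^ p` is truncated to
`max d ε ^ p`, which is continuous on all of `ℝ` and has a primitive. The energy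
`½ ∑ mᵢ zᵢ² + ∑_{i<j} M i j φ(z j - z i)` with `φ' = -max · ε ^ p` is smooth and coercive, so it has
a minimizer, whose norm is bounded independently of `ε` (`energy_coercive`). Testing the
Euler–Lagrange equation against the indicator of `{b, b + 1, …}` bounds the truncated force between
`a < b` at the minimizer by a constant independent of `ε`. As the truncation level `ε ^ p` can be
taken above that constant, all gaps exceed `ε`: the minimizer is ordered and the truncation is
invisible there. It therefore solves `m i * z i = ∑ M i j |z i - z j| ^ α (z i - z j)`, and
rescaling normalizes it.
-/

open Finset

/-- The force `a ↦ |a| ^ α * a` is decreasing on each half-line. -/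
lemma force_antitone {α : ℝ} (hα : α < -1) {a b : ℝ} (h : (0 < a ∧ 0 < b) ∨ (a < 0 ∧ b < 0)) :
    (|a| ^ α * a - |b| ^ α * b) * (a - b) ≤ 0 := by
  have key : ∀ a b : ℝ, 0 < a → 0 < b → (|a| ^ α * a - |b| ^ α * b) * (a - b) ≤ 0 := by
    intro a b ha hb
    rw [abs_of_pos ha, abs_of_pos hb, ← Real.rpow_add_one ha.ne', ← Real.rpow_add_one hb.ne']
    rcases le_total a b with hab | hab
    · have := Real.rpow_le_rpow_of_nonpos ha hab (by linarith : α + 1 ≤ 0)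
      exact mul_nonpos_of_nonneg_of_nonpos (by linarith) (by linarith)
    · have := Real.rpow_le_rpow_of_nonpos hb hab (by linarith : α + 1 ≤ 0)
      exact mul_nonpos_of_nonpos_of_nonneg (by linarith) (by linarith)
  rcases h with ⟨ha, hb⟩ | ⟨ha, hb⟩
  · exact key a b ha hb
  · have := key (-a) (-b) (by linarith) (by linarith)
    rw [abs_neg, abs_neg] at this
    nlinarith

/-- Summation by symmetrization for an antisymmetric array. -/
lemma sum_mul_antisymm {n : ℕ} (A : Fin n → Fin n → ℝ) (hA : ∀ i j, i ≠ j → A i j = -A j i)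
    (v : Fin n → ℝ) :
    2 * ∑ i, v i * ∑ j ∈ univ.filter (fun j => j ≠ i), A i j =
      ∑ i, ∑ j ∈ univ.filter (fun j => j ≠ i), A i j * (v i - v j) := by
  have h1 : ∑ i, v i * ∑ j ∈ univ.filter (fun j => j ≠ i), A i j
      = ∑ i, ∑ j, if j ≠ i then A i j * v i else 0 := by
    refine sum_congr rfl fun i _ => ?_
    rw [mul_sum, sum_filter]
    exact sum_congr rfl fun j _ => by split_ifs <;> ring
  have h2 : ∑ i, ∑ j, (if j ≠ i then A i j * v i else 0)
      = ∑ i, ∑ j, if j ≠ i then -(A i j * v j) else 0 := by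
    rw [sum_comm]
    refine sum_congr rfl fun i _ => sum_congr rfl fun j _ => ?_
    by_cases h : j = i
    · simp [h]
    · rw [if_pos h, if_pos (Ne.symm h), hA j i h]
      ring
  rw [two_mul, h1]
  nth_rewrite 2 [h2]
  rw [← sum_add_distrib]
  refine sum_congr rfl fun i _ => ?_
  rw [← sum_add_distrib, sum_filter]
  exact sum_congr rfl fun j _ => by split_ifs <;> ring

lemma force_antisymm {n : ℕ} (M : Fin n → Fin n → ℝ) (hsym : ∀ i j, i ≠ j → M i j = M j i)
    (α : ℝ) (x : Fin n → ℝ) (i j : Fin n) (h : i ≠ j) :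
    M i j * |x i - x j| ^ α * (x i - x j) = -(M j i * |x j - x i| ^ α * (x j - x i)) := by
  rw [hsym i j h, abs_sub_comm]
  ring

/-- The total force field is monotone decreasing on each ordering cone. -/
lemma pairing_nonpos {n : ℕ} (M : Fin n → Fin n → ℝ) (hsym : ∀ i j, i ≠ j → M i j = M j i)
    {α : ℝ} (hα : α < -1) (hM : ∀ i j, i ≠ j → 0 < M i j) (x y : Fin n → ℝ)
    (hxy : ∀ i j, i ≠ j → (0 < x i - x j ∧ 0 < y i - y j) ∨ (x i - x j < 0 ∧ y i - y j < 0)) :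
    ∑ i, (x i - y i) * (∑ j ∈ univ.filter (fun j => j ≠ i), M i j * |x i - x j| ^ α * (x i - x j)
      - ∑ j ∈ univ.filter (fun j => j ≠ i), M i j * |y i - y j| ^ α * (y i - y j)) ≤ 0 := by
  have h := sum_mul_antisymm
    (fun i j => M i j * |x i - x j| ^ α * (x i - x j) - M i j * |y i - y j| ^ α * (y i - y j))
    (fun i j h => by
      have h1 := force_antisymm M hsym α x i j h
      have h2 := force_antisymm M hsym α y i j h
      linarith) (fun i => x i - y i)
  simp only [sum_sub_distrib] at h ⊢
  have h3 : ∑ i, ∑ j ∈ univ.filter (fun j => j ≠ i),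
      (M i j * |x i - x j| ^ α * (x i - x j) - M i j * |y i - y j| ^ α * (y i - y j))
        * (x i - y i - (x j - y j)) ≤ 0 := by
    refine sum_nonpos fun i _ => sum_nonpos fun j hj => ?_
    have hij : i ≠ j := (mem_filter.1 hj).2.symm
    have := force_antitone hα (hxy i j hij)
    have := mul_nonpos_of_nonneg_of_nonpos (hM i j hij).le this
    linarith
  linarith

lemma multiplier_pos {n : ℕ} (m : Fin n → ℝ) (hm : ∀ i, 0 < m i)
    (M : Fin n → Fin n → ℝ) (hsym : ∀ i j, i ≠ j → M i j = M j i)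
    (α : ℝ) (hM : ∀ i j, i ≠ j → 0 < M i j) (x : Fin n → ℝ) (hx : ∑ i, m i * x i ^ 2 = 1)
    (lam : ℝ) (hl : lam ≠ 0)
    (h : ∀ i, (m i)⁻¹ * ∑ j ∈ univ.filter (fun j => j ≠ i),
            M i j * |x i - x j| ^ α * (x i - x j) = lam * x i) : 0 < lam := by
  refine lt_of_le_of_ne ?_ hl.symm
  have h1 := sum_mul_antisymm (fun i j => M i j * |x i - x j| ^ α * (x i - x j))
    (force_antisymm M hsym α x) x
  have h2 : ∑ i, x i * ∑ j ∈ univ.filter (fun j => j ≠ i),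
      M i j * |x i - x j| ^ α * (x i - x j) = lam := by
    rw [← mul_one lam, ← hx, mul_sum]
    refine sum_congr rfl fun i _ => ?_
    have h3 := h i
    rw [inv_mul_eq_iff_eq_mul₀ (hm i).ne'] at h3
    rw [h3]
    ring
  have h3 : 0 ≤ ∑ i, ∑ j ∈ univ.filter (fun j => j ≠ i),
      M i j * |x i - x j| ^ α * (x i - x j) * (x i - x j) := by
    refine sum_nonneg fun i _ => sum_nonneg fun j hj => ?_
    have hij : i ≠ j := (mem_filter.1 hj).2.symm
    rw [mul_assoc]
    exact mul_nonneg (mul_nonneg (hM i j hij).le (Real.rpow_nonneg (abs_nonneg _) _))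
      (mul_self_nonneg _)
  rw [h2] at h1
  linarith

/-- Two normalized central configurations with the same ordering coincide. -/
lemma cc_unique {n : ℕ} (m : Fin n → ℝ) (hm : ∀ i, 0 < m i)
    (M : Fin n → Fin n → ℝ) (hsym : ∀ i j, i ≠ j → M i j = M j i)
    {α : ℝ} (hα : α < -1) (hM : ∀ i j, i ≠ j → 0 < M i j) (x y : Fin n → ℝ)
    (hxy : ∀ i j, i ≠ j → (0 < x i - x j ∧ 0 < y i - y j) ∨ (x i - x j < 0 ∧ y i - y j < 0))
    (hx : ∑ i, m i * x i ^ 2 = 1) (hy : ∑ i, m i * y i ^ 2 = 1)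
    (lam mu : ℝ) (hl : lam ≠ 0) (hmu : mu ≠ 0)
    (h : ∀ i, (m i)⁻¹ * ∑ j ∈ univ.filter (fun j => j ≠ i),
            M i j * |x i - x j| ^ α * (x i - x j) = lam * x i)
    (h' : ∀ i, (m i)⁻¹ * ∑ j ∈ univ.filter (fun j => j ≠ i),
            M i j * |y i - y j| ^ α * (y i - y j) = mu * y i) : x = y := by
  have hlp := multiplier_pos m hm M hsym α hM x hx lam hl h
  have hmp := multiplier_pos m hm M hsym α hM y hy mu hmu h'
  have h1 := pairing_nonpos M hsym hα hM x y hxy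
  have h2 : ∀ i, (x i - y i) * (∑ j ∈ univ.filter (fun j => j ≠ i),
        M i j * |x i - x j| ^ α * (x i - x j)
      - ∑ j ∈ univ.filter (fun j => j ≠ i), M i j * |y i - y j| ^ α * (y i - y j))
      = lam * (m i * x i ^ 2) + mu * (m i * y i ^ 2) - (lam + mu) * (m i * (x i * y i)) := by
    intro i
    have h3 := h i
    have h4 := h' i
    rw [inv_mul_eq_iff_eq_mul₀ (hm i).ne'] at h3 h4
    rw [h3, h4]
    ring
  rw [sum_congr rfl fun i _ => h2 i, sum_sub_distrib, sum_add_distrib, ← mul_sum, ← mul_sum,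
    ← mul_sum, hx, hy] at h1
  have h5 : 1 ≤ ∑ i, m i * (x i * y i) := by
    by_contra! hc
    nlinarith
  have h6 : ∑ i, m i * (x i - y i) ^ 2 = 2 - 2 * ∑ i, m i * (x i * y i) := by
    have : ∀ i, m i * (x i - y i) ^ 2
        = m i * x i ^ 2 + m i * y i ^ 2 - 2 * (m i * (x i * y i)) := fun i => by ring
    rw [sum_congr rfl fun i _ => this i, sum_sub_distrib, sum_add_distrib, ← mul_sum, hx, hy]
    ring
  have h7 : ∀ i ∈ univ, 0 ≤ m i * (x i - y i) ^ 2 :=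
    fun i _ => mul_nonneg (hm i).le (sq_nonneg _)
  have h8 := (sum_eq_zero_iff_of_nonneg h7).1 (le_antisymm (by linarith) (sum_nonneg h7))
  funext i
  have h9 := h8 i (mem_univ i)
  have h10 := (mul_eq_zero.1 h9).resolve_left (hm i).ne'
  exact sub_eq_zero.1 (pow_eq_zero_iff two_ne_zero |>.1 h10)

/-- A potential for a repulsive force `g` that crosses the level `1` at distance `1`. The bounds on
the potential do not depend on `g`. -/
lemma exists_potential (g : ℝ → ℝ) (hg : Continuous g) (h0 : ∀ d, 0 ≤ g d)
    (h1 : ∀ d, d ≤ 1 → 1 ≤ g d) (h2 : ∀ d, 1 ≤ d → g d ≤ 1) :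
    ∃ φ : ℝ → ℝ, (∀ d, HasDerivAt φ (-g d) d) ∧ (∀ d, 1 - d ≤ φ d) ∧ (∀ d, 1 ≤ d → φ d ≤ 0) := by
  have hi : ∀ a b, IntervalIntegrable g MeasureTheory.volume a b :=
    fun a b => hg.intervalIntegrable a b
  refine ⟨fun d => -∫ s in (1 : ℝ)..d, g s, fun d => ?_, fun d => ?_, fun d hd => ?_⟩
  · exact (intervalIntegral.integral_hasDerivAt_right (hi 1 d)
      hg.stronglyMeasurable.stronglyMeasurableAtFilter hg.continuousAt).neg
  · rcases le_total 1 d with hd | hd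
    · have := intervalIntegral.integral_mono_on hd (hi 1 d)
        (continuous_const.intervalIntegrable 1 d) (fun s hs => h2 s hs.1)
      rw [intervalIntegral.integral_const] at this
      simp only [smul_eq_mul, mul_one] at this
      linarith
    · have := intervalIntegral.integral_mono_on hd
        (continuous_const.intervalIntegrable d 1) (hi d 1) (fun s hs => h1 s hs.2)
      rw [intervalIntegral.integral_const] at this
      simp only [smul_eq_mul, mul_one] at this
      change 1 - d ≤ -∫ s in (1 : ℝ)..d, g s
      rw [intervalIntegral.integral_symm]
      linarith
  · have := intervalIntegral.integral_nonneg hd (fun s _ => h0 s) (μ := MeasureTheory.volume)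
    linarith

/-- Sum of the moment of inertia term and the pair potentials `φ (z j - z i)` with weights `W`. -/
noncomputable def energy {n : ℕ} (m : Fin n → ℝ) (W : Fin n → Fin n → ℝ) (φ : ℝ → ℝ)
    (z : Fin n → ℝ) : ℝ :=
  (1 / 2) * ∑ i, m i * z i ^ 2 + ∑ i, ∑ j, W i j * φ (z j - z i)

/-- Coercivity of the energy, with a radius that works for all admissible potentials at once. -/
lemma energy_coercive {n : ℕ} [Nonempty (Fin n)] (m : Fin n → ℝ) (hm : ∀ i, 0 < m i)
    (W : Fin n → Fin n → ℝ) (hW : ∀ i j, 0 ≤ W i j) (hW' : ∀ i j, ¬ i < j → W i j = 0) :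
    ∃ R : ℝ, 0 < R ∧ ∀ φ : ℝ → ℝ, (∀ d, 1 - d ≤ φ d) → (∀ d, 1 ≤ d → φ d ≤ 0) →
      ∀ z : Fin n → ℝ, R < ‖z‖ →
        energy m W φ (fun i => ((i : ℕ) : ℝ)) < energy m W φ z := by
  set z0 : Fin n → ℝ := fun i => ((i : ℕ) : ℝ) with hz0
  obtain ⟨k, hk⟩ := Finite.exists_min m
  set c := m k
  have hc : 0 < c := hm k
  set K := ∑ i, ∑ j, W i j with hK
  have hK0 : 0 ≤ K := sum_nonneg fun i _ => sum_nonneg fun j _ => hW i j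
  set B := (1 / 2) * ∑ i, m i * z0 i ^ 2 with hB
  have hB0 : 0 ≤ B :=
    mul_nonneg (by norm_num) (sum_nonneg fun i _ => mul_nonneg (hm i).le (sq_nonneg _))
  have hq : 0 ≤ (4 * K + 2 * B) / c := by positivity
  refine ⟨1 + (4 * K + 2 * B) / c, by linarith, fun φ h1 h2 z hz => ?_⟩
  have hup : energy m W φ z0 ≤ B := by
    have : ∑ i, ∑ j, W i j * φ (z0 j - z0 i) ≤ 0 := by
      refine sum_nonpos fun i _ => sum_nonpos fun j _ => ?_
      by_cases hij : i < j
      · refine mul_nonpos_of_nonneg_of_nonpos (hW i j) (h2 _ ?_)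
        have : ((i : ℕ) : ℝ) + 1 ≤ ((j : ℕ) : ℝ) := by exact_mod_cast hij
        simp only [hz0]
        linarith
      · rw [hW' i j hij, zero_mul]
    unfold energy
    linarith
  set r := ‖z‖ with hr
  have hzr : ∀ i, |z i| ≤ r := fun i => norm_le_pi_norm z i
  have hlow1 : c * r ^ 2 ≤ ∑ i, m i * z i ^ 2 := by
    obtain ⟨l, hl⟩ := Finite.exists_max fun i => |z i|
    have hrl : r = |z l| :=
      le_antisymm ((pi_norm_le_iff_of_nonneg (abs_nonneg _)).2 hl) (hzr l)
    rw [hrl, sq_abs]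
    refine le_trans (mul_le_mul_of_nonneg_right (hk l) (sq_nonneg _)) ?_
    exact single_le_sum (f := fun i => m i * z i ^ 2)
      (fun i _ => mul_nonneg (hm i).le (sq_nonneg _)) (mem_univ l)
  have hlow2 : -(K * (2 * r)) ≤ ∑ i, ∑ j, W i j * φ (z j - z i) := by
    rw [hK, sum_mul, ← sum_neg_distrib]
    refine sum_le_sum fun i _ => ?_
    rw [sum_mul, ← sum_neg_distrib]
    refine sum_le_sum fun j _ => ?_
    have hi := abs_le.1 (hzr i)
    have hj := abs_le.1 (hzr j)
    have := mul_le_mul_of_nonneg_left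
      (show -(2 * r) ≤ φ (z j - z i) by linarith [h1 (z j - z i)]) (hW i j)
    linarith
  have hr1 : 1 < r := by linarith
  have hcr : 4 * K + 2 * B < c * r := by
    have : (4 * K + 2 * B) / c < r := by linarith
    rw [div_lt_iff₀ hc] at this
    linarith
  have hlow : B < energy m W φ z := by
    unfold energy
    nlinarith
  linarith

/-- First variation of the energy at a minimizer. -/
lemma euler_lagrange {n : ℕ} (m : Fin n → ℝ) (W : Fin n → Fin n → ℝ) (φ g : ℝ → ℝ)
    (hφ : ∀ d, HasDerivAt φ (-g d) d) (z : Fin n → ℝ)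
    (hz : ∀ y, energy m W φ z ≤ energy m W φ y) (v : Fin n → ℝ) :
    ∑ i, m i * z i * v i = ∑ i, ∑ j, W i j * g (z j - z i) * (v j - v i) := by
  have hl : ∀ i, HasDerivAt (fun t : ℝ => z i + t * v i) (v i) 0 := fun i => by
    simpa using ((hasDerivAt_id (0 : ℝ)).mul_const (v i)).const_add (z i)
  have hd : HasDerivAt (fun t : ℝ => energy m W φ (fun i => z i + t * v i))
      ((1 / 2) * ∑ i, m i * (2 * z i * v i)
        + ∑ i, ∑ j, W i j * (-g (z j - z i) * (v j - v i))) 0 := by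
    unfold energy
    refine HasDerivAt.add (HasDerivAt.const_mul _ (HasDerivAt.fun_sum fun i _ => ?_))
      (HasDerivAt.fun_sum fun i _ => HasDerivAt.fun_sum fun j _ => ?_)
    · refine HasDerivAt.const_mul _ ?_
      simpa using (hl i).fun_pow 2
    · refine HasDerivAt.const_mul _ ?_
      have h := hφ (z j - z i)
      have h' : HasDerivAt φ (-g (z j - z i)) ((z j + 0 * v j) - (z i + 0 * v i)) := by
        simpa using h
      exact h'.comp (0 : ℝ) ((hl j).sub (hl i))
  have hmin : IsLocalMin (fun t : ℝ => energy m W φ (fun i => z i + t * v i)) 0 := by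
    refine Filter.Eventually.of_forall fun t => ?_
    simpa using hz (fun i => z i + t * v i)
  have h0 := hmin.hasDerivAt_eq_zero hd
  have e1 : (1 / 2) * ∑ i, m i * (2 * z i * v i) = ∑ i, m i * z i * v i := by
    rw [mul_sum]
    exact sum_congr rfl fun i _ => by ring
  have e2 : ∑ i, ∑ j, W i j * (-g (z j - z i) * (v j - v i))
      = -∑ i, ∑ j, W i j * g (z j - z i) * (v j - v i) := by
    rw [← sum_neg_distrib]
    refine sum_congr rfl fun i _ => ?_
    rw [← sum_neg_distrib]
    exact sum_congr rfl fun j _ => by ring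
  rw [e1, e2] at h0
  linarith

/-- Existence of an increasing central configuration with multiplier `1`, not yet normalized. -/
lemma exists_ordered_cc {n : ℕ} [Nonempty (Fin n)] (m : Fin n → ℝ) (hm : ∀ i, 0 < m i)
    (M : Fin n → Fin n → ℝ) (hsym : ∀ i j, i ≠ j → M i j = M j i)
    {α : ℝ} (hα : α < -1) (hM : ∀ i j, i ≠ j → 0 < M i j) :
    ∃ z : Fin n → ℝ, StrictMono z ∧ (∑ i, m i * z i = 0) ∧
      ∀ i, ∑ j ∈ univ.filter (fun j => j ≠ i), M i j * |z i - z j| ^ α * (z i - z j)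
        = m i * z i := by
  set p := α + 1 with hp
  have hp0 : p < 0 := by linarith
  set W : Fin n → Fin n → ℝ := fun i j => if i < j then M i j else 0 with hWdef
  have hW : ∀ i j, 0 ≤ W i j := fun i j => by
    simp only [hWdef]
    split_ifs with h
    · exact (hM i j h.ne).le
    · exact le_rfl
  have hW' : ∀ i j, ¬ i < j → W i j = 0 := fun i j h => if_neg h
  obtain ⟨R, hR, hcoer⟩ := energy_coercive m hm W hW hW'
  set S := (∑ i, m i) * R with hS
  have hS0 : 0 ≤ S := mul_nonneg (sum_nonneg fun i _ => (hm i).le) hR.le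
  -- `T` is the value of the truncated force law at short distances; it is chosen so that `M i j * T`
  -- exceeds `S`, the largest force that bodies confined to the ball of radius `R` can balance.
  obtain ⟨T0, hT0⟩ := (Set.finite_range fun q : Fin n × Fin n => (S + 1) / M q.1 q.2).bddAbove
  set T := max T0 1 with hT
  have hT1 : 1 ≤ T := le_max_right _ _
  have hTM : ∀ i j, i ≠ j → S < M i j * T := fun i j hij => by
    have h1 : (S + 1) / M i j ≤ T := (hT0 ⟨(i, j), rfl⟩).trans (le_max_left _ _)
    rw [div_le_iff₀ (hM i j hij)] at h1
    linarith
  set ε := T ^ (1 / p) with hε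
  have hε0 : 0 < ε := Real.rpow_pos_of_pos (by linarith) _
  have hεT : ε ^ p = T := by
    rw [hε, ← Real.rpow_mul (by linarith), one_div_mul_cancel hp0.ne, Real.rpow_one]
  have hε1 : ε ≤ 1 :=
    Real.rpow_le_one_of_one_le_of_nonpos hT1 (by rw [one_div]; exact (inv_lt_zero.2 hp0).le)
  set g : ℝ → ℝ := fun d => max d ε ^ p with hg
  have hpos : ∀ d, 0 < max d ε := fun d => lt_max_of_lt_right hε0
  have hgc : Continuous g :=
    (continuous_id.max continuous_const).rpow_const fun d => Or.inl (hpos d).ne'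
  have hg0 : ∀ d, 0 ≤ g d := fun d => Real.rpow_nonneg (hpos d).le _
  obtain ⟨φ, hφ, hφ1, hφ2⟩ := exists_potential g hgc hg0
    (fun d hd => Real.one_le_rpow_of_pos_of_le_one_of_nonpos (hpos d) (max_le hd hε1) hp0.le)
    (fun d hd => Real.rpow_le_one_of_one_le_of_nonpos (hd.trans (le_max_left _ _)) hp0.le)
  have hφc : Continuous φ := continuous_iff_continuousAt.2 fun d => (hφ d).continuousAt
  have hEc : Continuous (energy m W φ) := by
    unfold energy
    fun_prop
  obtain ⟨z, hz⟩ := hEc.exists_forall_le' (fun i => ((i : ℕ) : ℝ)) (by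
    filter_upwards [(tendsto_norm_cocompact_atTop (E := Fin n → ℝ)).eventually_gt_atTop R]
      with y hy
    exact (hcoer φ hφ1 hφ2 y hy).le)
  have hzR : ‖z‖ ≤ R := by
    by_contra! hc
    exact absurd (hz _) (not_le.2 (hcoer φ hφ1 hφ2 z hc))
  have hEL := euler_lagrange m W φ g hφ z hz
  have hgap : ∀ a b, a < b → ε < z b - z a := by
    intro a b hab
    by_contra! hle
    have h1 := hEL fun i => if b ≤ i then 1 else 0
    have h2 : ∑ i, m i * z i * (if b ≤ i then 1 else 0) ≤ S := by
      rw [hS, sum_mul]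
      refine sum_le_sum fun i _ => ?_
      have h3 : |z i| ≤ R := (norm_le_pi_norm z i).trans hzR
      have h4 := (abs_le.1 h3).2
      split_ifs
      · rw [mul_one]
        exact mul_le_mul_of_nonneg_left h4 (hm i).le
      · rw [mul_zero]
        exact mul_nonneg (hm i).le hR.le
    have h5 : ∀ i j, 0 ≤ W i j * g (z j - z i)
        * ((if b ≤ j then (1 : ℝ) else 0) - if b ≤ i then 1 else 0) := by
      intro i j
      by_cases hij : i < j
      · refine mul_nonneg (mul_nonneg (hW i j) (hg0 _)) ?_
        by_cases hbi : b ≤ i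
        · rw [if_pos hbi, if_pos (hbi.trans hij.le), sub_self]
        · rw [if_neg hbi]
          split_ifs <;> norm_num
      · rw [hW' i j hij, zero_mul, zero_mul]
    have h6 : M a b * T ≤ ∑ i, ∑ j, W i j * g (z j - z i)
        * ((if b ≤ j then (1 : ℝ) else 0) - if b ≤ i then 1 else 0) := by
      have e : M a b * T = W a b * g (z b - z a)
          * ((if b ≤ b then (1 : ℝ) else 0) - if b ≤ a then 1 else 0) := by
        simp only [hWdef, hg]
        rw [if_pos hab, if_pos le_rfl, if_neg (not_le.2 hab), max_eq_right hle, hεT]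
        ring
      rw [e]
      refine le_trans (single_le_sum (f := fun j => W a j * g (z j - z a)
        * ((if b ≤ j then (1 : ℝ) else 0) - if b ≤ a then 1 else 0))
        (fun j _ => h5 a j) (mem_univ b)) ?_
      exact single_le_sum (f := fun i => ∑ j, W i j * g (z j - z i)
        * ((if b ≤ j then (1 : ℝ) else 0) - if b ≤ i then 1 else 0))
        (fun i _ => sum_nonneg fun j _ => h5 i j) (mem_univ a)
    have := hTM a b hab.ne
    linarith
  refine ⟨z, fun a b hab => by linarith [hgap a b hab], ?_, fun k => ?_⟩
  · simpa using hEL fun _ => 1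
  · have h1 := hEL (Pi.single k 1)
    have h2 : ∑ i, m i * z i * (Pi.single k 1 : Fin n → ℝ) i = m k * z k := by
      simp [Pi.single_apply]
    rw [h2] at h1
    rw [h1]
    have hWg : ∀ i j, i < j → W i j * g (z j - z i)
        = M i j * |z i - z j| ^ α * (z j - z i) := by
      intro i j hij
      have h3 := hgap i j hij
      have h4 : 0 < z j - z i := by linarith
      simp only [hWdef, hg]
      rw [if_pos hij, max_eq_left h3.le, hp, Real.rpow_add_one h4.ne', abs_sub_comm,
        abs_of_pos h4]
      ring
    have h3 : ∑ i, ∑ j, W i j * g (z j - z i)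
          * ((Pi.single k 1 : Fin n → ℝ) j - (Pi.single k 1 : Fin n → ℝ) i)
        = ∑ j, (W j k * g (z k - z j) - W k j * g (z j - z k)) := by
      simp only [mul_sub, sum_sub_distrib]
      congr 1
      · simp [Pi.single_apply]
      · rw [sum_comm]
        simp [Pi.single_apply]
    rw [h3, sum_filter]
    refine sum_congr rfl fun j _ => ?_
    rcases lt_trichotomy j k with h | h | h
    · rw [if_pos h.ne, hWg j k h, hW' k j h.not_gt, hsym j k h.ne, abs_sub_comm]
      ring
    · simp [h]
    · rw [if_pos h.ne', hWg k j h, hW' j k h.not_gt]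
      ring


/-- Generalized Moulton theorem, ordered form: For `α < -1` and
`m_{ij} > 0` for all `i ≠ j`, for every ordering (permutation) `σ` of the bodies
there is exactly one normalized collinear central configuration `z` with
`z_{σ(1)} < z_{σ(2)} < ⋯ < z_{σ(n)}`. -/
theorem stmt10 (n : ℕ) (hn : 3 ≤ n) (m : Fin n → ℝ) (hm : ∀ i, 0 < m i)
    (M : Fin n → Fin n → ℝ) (hsym : ∀ i j, i ≠ j → M i j = M j i)
    (α : ℝ) (hα : α < -1) (hM : ∀ i j, i ≠ j → 0 < M i j) :
    ∀ σ : Equiv.Perm (Fin n),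
      ∃! z : Fin n → ℝ,
        StrictMono (fun i => z (σ i)) ∧
        (∑ i, m i * z i = 0) ∧
        (∑ i, m i * z i ^ 2 = 1) ∧
        ∃ lam : ℝ, lam ≠ 0 ∧ ∀ i,
          (m i)⁻¹ * ∑ j ∈ Finset.univ.filter (fun j => j ≠ i),
            M i j * |z i - z j| ^ α * (z i - z j) = lam * z i := by
  intro σ
  have : Nonempty (Fin n) := ⟨⟨0, by omega⟩⟩
  refine existsUnique_of_exists_of_unique ?_ ?_
  · obtain ⟨x, hx, hx0, hxe⟩ := exists_ordered_cc (fun i => m (σ i)) (fun i => hm _)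
      (fun i j => M (σ i) (σ j)) (fun i j h => hsym _ _ (σ.injective.ne h)) hα
      (fun i j h => hM _ _ (σ.injective.ne h))
    set I := ∑ i, m (σ i) * x i ^ 2 with hI
    have hI0 : 0 < I := by
      have hnn : ∀ i ∈ univ, 0 ≤ m (σ i) * x i ^ 2 :=
        fun i _ => mul_nonneg (hm _).le (sq_nonneg _)
      refine lt_of_le_of_ne (sum_nonneg hnn) fun h => ?_
      have h1 := (sum_eq_zero_iff_of_nonneg hnn).1 h.symm
      have h2 : ∀ i, x i = 0 := fun i =>
        pow_eq_zero_iff two_ne_zero |>.1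
          ((mul_eq_zero.1 (h1 i (mem_univ i))).resolve_left (hm _).ne')
      have h3 : x ⟨0, by omega⟩ < x ⟨1, by omega⟩ := hx (by simp [Fin.lt_def])
      rw [h2, h2] at h3
      exact lt_irrefl _ h3
    set s := √I with hs
    have hs0 : 0 < s := Real.sqrt_pos.2 hI0
    have hs2 : s ^ 2 = I := Real.sq_sqrt hI0.le
    refine ⟨fun i => x (σ.symm i) / s, ?_, ?_, ?_, s ^ (-α), (Real.rpow_pos_of_pos hs0 _).ne', ?_⟩
    · intro a b hab
      simpa using div_lt_div_of_pos_right (hx hab) hs0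
    · rw [← Equiv.sum_comp σ]
      simp only [Equiv.symm_apply_apply, mul_div_assoc']
      rw [← sum_div, hx0, zero_div]
    · rw [← Equiv.sum_comp σ]
      simp only [Equiv.symm_apply_apply, div_pow, mul_div_assoc']
      rw [← sum_div, hs2, ← hI, div_self hI0.ne']
    · intro i
      obtain ⟨k, rfl⟩ := σ.surjective i
      rw [inv_mul_eq_iff_eq_mul₀ (hm _).ne', sum_filter, ← Equiv.sum_comp σ]
      simp only [Equiv.symm_apply_apply]
      have h1 := hxe k
      rw [sum_filter] at h1
      have h2 : m (σ k) * (s ^ (-α) * (x k / s)) = s ^ (-α) / s * (m (σ k) * x k) := by ring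
      rw [h2, ← h1, mul_sum]
      refine sum_congr rfl fun j _ => ?_
      by_cases h : j = k
      · simp [h]
      · rw [if_pos h, if_pos (σ.injective.ne h), ← sub_div, abs_div, abs_of_pos hs0,
          Real.div_rpow (abs_nonneg _) hs0.le, Real.rpow_neg hs0.le]
        ring
  · rintro x y ⟨hx, -, hx1, lam, hl, hxe⟩ ⟨hy, -, hy1, mu, hmu, hye⟩
    refine cc_unique m hm M hsym hα hM x y (fun i j hij => ?_) hx1 hy1 lam mu hl hmu hxe hye
    obtain ⟨a, rfl⟩ := σ.surjective i
    obtain ⟨b, rfl⟩ := σ.surjective j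
    rcases lt_or_gt_of_ne (fun h => hij (congrArg σ h) : a ≠ b) with h | h
    · exact Or.inr ⟨sub_neg.2 (hx h), sub_neg.2 (hy h)⟩
    · exact Or.inl ⟨sub_pos.2 (hx h), sub_pos.2 (hy h)⟩
end

section
/- (Generalized Moulton theorem, counting form.) Suppose α < −1, every coefficient m_{ij} is nonzero, and all the m_{ij} have the same sign. Then the set { z ∈ ℝⁿ : the z_i are pairwise distinct, ∑_i m_i z_i = 0, ∑_i m_i z_i² = 1, and there is a real λ ≠ 0 with w_i(z) = λ z_i for all i } has exactly n! elements; equivalently, there are exactly n!/2 collinear central configurations up to the symmetry z ↦ −z. -/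
/-! The sign of `M` only affects the sign of the multiplier, so assume `M > 0`.  On the cone of strictly
increasing `z`, pairing the equations with a test vector `v` turns them into the weak form
`lam * ∑ i, m i * z i * v i = ∑_{i<j} M i j * (z j - z i) ^ (α + 1) * (v j - v i)`
(`pairing_force`), and since `α + 1 < 0` the profile `r ↦ r ^ (α + 1)` is decreasing.

*Uniqueness* in each ordering (`unique_of_weak`): test the difference of two solutions against
`v = z - y`; monotonicity makes the right side nonpositive, while the normalization makes the left
side a positive multiple of `∑ i, m i * (z i - y i) ^ 2`.

*Existence* in each ordering (`exists_weak`): replace the profile by the bounded continuous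
antitone function `r ↦ (max r ε) ^ (α + 1)`, defined on all of `ℝ`.  The weak equation with
multiplier `1` is then the Euler–Lagrange equation of a coercive `C¹` function on all of `ℝⁿ`, so it
has a solution (`exists_critical`).  Testing against `z - y` for the fixed configuration `y i = i`
bounds `z` independently of `ε`, and testing against the indicator of `{k | j ≤ k}` bounds
`M i j * (max (z j - z i) ε) ^ (α + 1)`.  For small `ε` every gap is therefore at least `ε`, and the
truncation is inactive.  Homogeneity then allows the normalization `∑ i, m i * z i ^ 2 = 1`.

Orderings are permutations: relabelling by `σ` reduces every cone to the increasing one, so the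
solutions are in bijection with `Equiv.Perm (Fin n)`.
-/

namespace Moulton

open Finset Filter

lemma exists_norm_sq_le {ι : Type*} [Fintype ι] (m : ι → ℝ) (hm : ∀ i, 0 < m i) :
    ∃ a : ℝ, 0 < a ∧ ∀ z : ι → ℝ, a * ‖z‖ ^ 2 ≤ ∑ i, m i * z i ^ 2 := by
  obtain ⟨a, ha, ham⟩ : ∃ a : ℝ, 0 < a ∧ ∀ i, a ≤ m i := by
    rcases isEmpty_or_nonempty ι with h | h
    · exact ⟨1, one_pos, fun i => h.elim i⟩
    · obtain ⟨i, hi⟩ := Finite.exists_min m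
      exact ⟨m i, hm i, hi⟩
  refine ⟨a, ha, fun z => ?_⟩
  have hnn : 0 ≤ ∑ i, m i * z i ^ 2 :=
    sum_nonneg fun i _ => mul_nonneg (hm i).le (sq_nonneg _)
  have : ‖z‖ ≤ Real.sqrt ((∑ i, m i * z i ^ 2) / a) := by
    rw [pi_norm_le_iff_of_nonneg (Real.sqrt_nonneg _)]
    intro i
    apply Real.le_sqrt_of_sq_le
    rw [le_div_iff₀ ha, Real.norm_eq_abs, sq_abs]
    calc z i ^ 2 * a ≤ m i * z i ^ 2 := by nlinarith [ham i, sq_nonneg (z i)]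
      _ ≤ _ := single_le_sum (f := fun i => m i * z i ^ 2)
        (fun i _ => mul_nonneg (hm i).le (sq_nonneg _)) (mem_univ i)
  have h2 := pow_le_pow_left₀ (norm_nonneg z) this 2
  rw [Real.sq_sqrt (div_nonneg hnn ha.le), le_div_iff₀ ha] at h2
  linarith

/-- The Euler–Lagrange equation of `z ↦ (∑ i, m i * z i ^ 2) / 2 - ∑ p, c p * H (ℓ p z)`, where `H`
is a primitive of the bounded continuous function `h`, has a solution: the function is coercive. -/
lemma exists_critical {ι P : Type*} [Fintype ι] [Fintype P] (m : ι → ℝ) (hm : ∀ i, 0 < m i)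
    (ℓ : P → (ι → ℝ) →L[ℝ] ℝ) (c : P → ℝ) (h : ℝ → ℝ) (hc : Continuous h) (K : ℝ)
    (hK : ∀ r, |h r| ≤ K) :
    ∃ z : ι → ℝ, ∀ v : ι → ℝ, ∑ i, m i * z i * v i = ∑ p, c p * h (ℓ p z) * ℓ p v := by
  set H : ℝ → ℝ := fun r => ∫ t in (0:ℝ)..r, h t with hH
  have hHd : ∀ r, HasDerivAt H (h r) r := fun r => (hc.integral_hasStrictDerivAt 0 r).hasDerivAt
  have hHc : Continuous H := continuous_iff_continuousAt.2 fun r => (hHd r).continuousAt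
  have hHb : ∀ r, |H r| ≤ K * |r| := fun r => by
    have := intervalIntegral.norm_integral_le_of_norm_le_const (a := 0) (b := r) (f := h)
      (C := K) (fun x _ => hK x)
    simpa using this
  have hK0 : 0 ≤ K := (abs_nonneg _).trans (hK 0)
  obtain ⟨a, ha, hma⟩ := exists_norm_sq_le m hm
  set C : ℝ := ∑ p, |c p| * (K * ‖ℓ p‖) with hC
  set Φ : (ι → ℝ) → ℝ := fun z => (∑ i, m i * z i ^ 2) / 2 - ∑ p, c p * H (ℓ p z) with hΦ
  have hΦc : Continuous Φ := by
    have : ∀ p, Continuous fun z => H (ℓ p z) := fun p => hHc.comp (ℓ p).continuous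
    fun_prop
  have hΦb : ∀ z, ‖z‖ * (a / 2 * ‖z‖ - C) ≤ Φ z := by
    intro z
    have h1 : ∑ p, c p * H (ℓ p z) ≤ C * ‖z‖ := by
      rw [hC, sum_mul]
      refine sum_le_sum fun p _ => ?_
      calc c p * H (ℓ p z) ≤ |c p * H (ℓ p z)| := le_abs_self _
        _ = |c p| * |H (ℓ p z)| := abs_mul _ _
        _ ≤ |c p| * (K * (‖ℓ p‖ * ‖z‖)) := by
          gcongr
          refine (hHb _).trans ?_
          gcongr
          exact (ℓ p).le_opNorm z
        _ = _ := by ring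
    have h2 := hma z
    simp only [hΦ]
    nlinarith
  have hlim : Tendsto Φ (cocompact _) atTop := by
    refine tendsto_atTop_mono hΦb ?_
    have hn : Tendsto (fun z : ι → ℝ => ‖z‖) (cocompact _) atTop := tendsto_norm_cocompact_atTop
    exact hn.atTop_mul_atTop₀
      (tendsto_atTop_add_const_right _ _ (hn.const_mul_atTop (half_pos ha)))
  obtain ⟨z, hz⟩ := hΦc.exists_forall_le hlim
  refine ⟨z, fun v => ?_⟩
  have hd : HasDerivAt (fun t : ℝ => Φ (z + t • v))
      (∑ i, m i * z i * v i - ∑ p, c p * h (ℓ p z) * ℓ p v) 0 := by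
    simp only [hΦ, Pi.add_apply, Pi.smul_apply, smul_eq_mul, map_add, map_smul]
    apply HasDerivAt.sub
    · have : ∑ i, m i * z i * v i = (∑ i, m i * (2 * z i * v i)) / 2 := by
        rw [sum_div]; exact sum_congr rfl fun i _ => by ring
      rw [this]
      apply HasDerivAt.div_const
      apply HasDerivAt.fun_sum
      intro i _
      apply HasDerivAt.const_mul
      have h1 : HasDerivAt (fun t : ℝ => z i + t * v i) (v i) 0 := by
        simpa using ((hasDerivAt_id (0:ℝ)).mul_const (v i)).const_add (z i)
      simpa using h1.fun_pow 2
    · apply HasDerivAt.fun_sum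
      intro p _
      rw [mul_assoc]
      apply HasDerivAt.const_mul
      have h1 : HasDerivAt (fun t : ℝ => ℓ p z + t * ℓ p v) (ℓ p v) 0 := by
        simpa using ((hasDerivAt_id (0:ℝ)).mul_const (ℓ p v)).const_add (ℓ p z)
      have h2 := hHd (ℓ p z + 0 * ℓ p v)
      simpa [Function.comp_def] using h2.comp (0:ℝ) h1
  have hmin : IsLocalMin (fun t : ℝ => Φ (z + t • v)) 0 :=
    Eventually.of_forall fun t => by simpa using hz (z + t • v)
  linarith [hmin.hasDerivAt_eq_zero hd]

/-- The coefficients `W i j`, counted once for each pair `i < j`. -/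
def upper {n : ℕ} (W : Fin n → Fin n → ℝ) (i j : Fin n) : ℝ := if i < j then W i j else 0

/-- The force on the `i`-th body. -/
noncomputable def force {n : ℕ} (α : ℝ) (W : Fin n → Fin n → ℝ) (z : Fin n → ℝ) (i : Fin n) : ℝ :=
  ∑ j ∈ univ.filter (fun j => j ≠ i), W i j * |z i - z j| ^ α * (z i - z j)

lemma upper_nonneg {n : ℕ} {W : Fin n → Fin n → ℝ} (hW : ∀ i j, i ≠ j → 0 < W i j)
    (i j : Fin n) : 0 ≤ upper W i j := by
  unfold upper
  split_ifs with h
  · exact (hW i j h.ne).le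
  · exact le_rfl

/-- Summation by parts: for increasing `z`, the pairing of the force with a test vector is a sum
over ordered pairs. -/
lemma pairing_force {n : ℕ} {W : Fin n → Fin n → ℝ} (hsym : ∀ i j, i ≠ j → W i j = W j i)
    (α : ℝ) {z : Fin n → ℝ} (hz : StrictMono z) (v : Fin n → ℝ) :
    ∑ i, force α W z i * v i =
      ∑ i, ∑ j, upper W i j * (z j - z i) ^ (α + 1) * (v j - v i) := by
  have h1 : ∀ i, force α W z i * v i =
      ∑ j, (upper W j i * (z i - z j) ^ (α + 1) * v i
        - upper W i j * (z j - z i) ^ (α + 1) * v i) := by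
    intro i
    rw [force, sum_mul, sum_filter]
    refine sum_congr rfl fun j _ => ?_
    unfold upper
    rcases lt_trichotomy i j with h | h | h
    · have hp : 0 < z j - z i := sub_pos.2 (hz h)
      rw [if_pos h.ne', if_neg h.asymm, if_pos h, abs_sub_comm, abs_of_pos hp,
        Real.rpow_add_one hp.ne']
      ring
    · subst h; simp
    · have hp : 0 < z i - z j := sub_pos.2 (hz h)
      rw [if_pos h.ne, if_neg h.asymm, if_pos h, abs_of_pos hp, Real.rpow_add_one hp.ne',
        hsym i j h.ne']
      ring
  simp only [h1, sum_sub_distrib, mul_sub]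
  rw [sum_comm]

/-- The profile `r ↦ r ^ (α + 1)` truncated below `ε`. -/
noncomputable def trunc (α ε r : ℝ) : ℝ := (max r ε) ^ (α + 1)

lemma trunc_continuous (α : ℝ) {ε : ℝ} (hε : 0 < ε) : Continuous (trunc α ε) := by
  unfold trunc
  exact (continuous_id.max continuous_const).rpow_const
    fun r => Or.inl (lt_max_of_lt_right hε).ne'

lemma trunc_antitone {α : ℝ} (hα : α < -1) {ε : ℝ} (hε : 0 < ε) : Antitone (trunc α ε) :=
  fun _ _ h => Real.rpow_le_rpow_of_nonpos (lt_max_of_lt_right hε) (max_le_max_right ε h)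
    (by linarith)

lemma trunc_nonneg (α : ℝ) {ε : ℝ} (hε : 0 < ε) (r : ℝ) : 0 ≤ trunc α ε r :=
  Real.rpow_nonneg (lt_max_of_lt_right hε).le _

lemma exists_weak {n : ℕ} (m : Fin n → ℝ) (hm : ∀ i, 0 < m i) {W : Fin n → Fin n → ℝ}
    (hW : ∀ i j, i ≠ j → 0 < W i j) {α : ℝ} (hα : α < -1) :
    ∃ z : Fin n → ℝ, StrictMono z ∧ ∀ v : Fin n → ℝ,
      ∑ i, m i * z i * v i = ∑ i, ∑ j, upper W i j * (z j - z i) ^ (α + 1) * (v j - v i) := by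
  obtain ⟨a, ha, hma⟩ := exists_norm_sq_le m hm
  have hU := upper_nonneg hW
  have hmsum : 0 ≤ ∑ i, m i := sum_nonneg fun i _ => (hm i).le
  -- `C` and `R` bound the truncated solutions uniformly in `ε`; `B` then bounds their forces.
  set C : ℝ := ∑ i : Fin n, m i * (i : ℝ) + ∑ i, ∑ j, upper W i j * 2 with hC
  set R : ℝ := C / a with hR
  set B : ℝ := (∑ i, m i) * R with hB
  obtain ⟨T, hT1, hT⟩ : ∃ T : ℝ, 1 ≤ T ∧ ∀ i j : Fin n, i ≠ j → B < W i j * T := by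
    have hev : ∀ᶠ T : ℝ in atTop, 1 ≤ T ∧ ∀ i j : Fin n, i ≠ j → B < W i j * T := by
      refine (eventually_ge_atTop 1).and ?_
      rw [eventually_all]; intro i
      rw [eventually_all]; intro j
      by_cases hij : i = j
      · exact Eventually.of_forall fun _ h => absurd hij h
      · filter_upwards [(tendsto_id.const_mul_atTop (hW i j hij)).eventually_gt_atTop B]
          with T h _ using h
    exact hev.exists
  have hα1 : α + 1 < 0 := by linarith
  have hT0 : 0 < T := by linarith
  set ε : ℝ := T ^ (α + 1)⁻¹ with hε
  have hε0 : 0 < ε := Real.rpow_pos_of_pos hT0 _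
  have hε1 : ε ≤ 1 := Real.rpow_le_one_of_one_le_of_nonpos hT1 (inv_lt_zero.2 hα1).le
  have hεT : ε ^ (α + 1) = T := Real.rpow_inv_rpow hT0.le hα1.ne
  have hnn := trunc_nonneg α hε0
  have hanti := trunc_antitone hα hε0
  obtain ⟨z, hz⟩ := exists_critical m hm
    (fun p : Fin n × Fin n => ContinuousLinearMap.proj (R := ℝ) (φ := fun _ => ℝ) p.2
      - ContinuousLinearMap.proj p.1)
    (fun p => upper W p.1 p.2) (trunc α ε) (trunc_continuous α hε0) T (by
      intro r
      rw [abs_of_nonneg (hnn r), ← hεT]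
      exact Real.rpow_le_rpow_of_nonpos hε0 (le_max_right _ _) hα1.le)
  replace hz : ∀ v : Fin n → ℝ, ∑ i, m i * z i * v i =
      ∑ i, ∑ j, upper W i j * trunc α ε (z j - z i) * (v j - v i) := by
    intro v
    rw [hz v, Fintype.sum_prod_type]
    rfl
  have hzi : ∀ i, |z i| ≤ ‖z‖ := fun i => norm_le_pi_norm z i
  have hzR : ‖z‖ ≤ R := by
    have h1 := hz fun i => z i - (i : ℝ)
    have h2 : ∑ i, ∑ j, upper W i j * trunc α ε (z j - z i) * ((z j - (j:ℝ)) - (z i - (i:ℝ)))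
        ≤ (∑ i, ∑ j, upper W i j * 2) * ‖z‖ := by
      simp only [sum_mul]
      refine sum_le_sum fun i _ => sum_le_sum fun j _ => ?_
      by_cases hij : i < j
      · rw [mul_assoc, mul_assoc]
        refine mul_le_mul_of_nonneg_left ?_ (hU i j)
        have hs : (1:ℝ) ≤ (j:ℝ) - (i:ℝ) := by
          have h : ((i:ℕ):ℝ) + 1 ≤ (j:ℕ) := by exact_mod_cast Fin.lt_def.1 hij
          linarith
        have hr : z j - z i ≤ 2 * ‖z‖ := by
          linarith [abs_le.1 (hzi i), abs_le.1 (hzi j)]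
        have ht1 : trunc α ε ((j:ℝ) - i) ≤ 1 :=
          Real.rpow_le_one_of_one_le_of_nonpos (hs.trans (le_max_left _ _)) hα1.le
        have ht0 := hnn ((j:ℝ) - i)
        have hN := norm_nonneg z
        -- monotonicity of the profile replaces the gap of `z` by the gap of `y i = i`
        have hmono : trunc α ε (z j - z i) * ((z j - j) - (z i - i)) ≤
            trunc α ε ((j:ℝ) - i) * ((z j - j) - (z i - i)) := by
          rcases le_total (z j - z i) ((j:ℝ) - i) with h | h
          · exact mul_le_mul_of_nonpos_right (hanti h) (by linarith)
          · exact mul_le_mul_of_nonneg_right (hanti h) (by linarith)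
        refine hmono.trans ?_
        calc trunc α ε ((j:ℝ) - i) * ((z j - j) - (z i - i))
            ≤ trunc α ε ((j:ℝ) - i) * (2 * ‖z‖) :=
              mul_le_mul_of_nonneg_left (by linarith) ht0
          _ ≤ 1 * (2 * ‖z‖) := mul_le_mul_of_nonneg_right ht1 (by linarith)
          _ = 2 * ‖z‖ := one_mul _
      · simp [upper, hij]
    have h3 : ∑ i, m i * z i * (i : ℝ) ≤ (∑ i : Fin n, m i * (i:ℝ)) * ‖z‖ := by
      rw [sum_mul]
      refine sum_le_sum fun i _ => ?_
      have : m i * (i:ℝ) * z i ≤ m i * (i:ℝ) * ‖z‖ :=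
        mul_le_mul_of_nonneg_left ((le_abs_self _).trans (hzi i))
          (mul_nonneg (hm i).le (Nat.cast_nonneg _))
      linarith
    have h4 : ∑ i, m i * z i * (z i - (i:ℝ)) = ∑ i, m i * z i ^ 2 - ∑ i, m i * z i * (i:ℝ) := by
      rw [← sum_sub_distrib]; exact sum_congr rfl fun i _ => by ring
    have h5 : ‖z‖ * (a * ‖z‖) ≤ ‖z‖ * C := by
      have := hma z
      rw [hC]; nlinarith
    have hC0 : 0 ≤ C := add_nonneg
      (sum_nonneg fun i _ => mul_nonneg (hm i).le (Nat.cast_nonneg _))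
      (sum_nonneg fun i _ => sum_nonneg fun j _ => mul_nonneg (hU i j) zero_le_two)
    rw [hR, le_div_iff₀ ha]
    rcases (norm_nonneg z).eq_or_lt with h0 | h0
    · rw [← h0]; simpa using hC0
    · linarith [le_of_mul_le_mul_left h5 h0]
  have hgap : ∀ i j, i < j → ε ≤ z j - z i := by
    intro i j hij
    by_contra! hlt
    -- the test vector is the indicator of the bodies from `j` on
    have h1 := hz fun k => if j ≤ k then 1 else 0
    have hterm : ∀ k l, 0 ≤ upper W k l * trunc α ε (z l - z k) *
        ((if j ≤ l then (1:ℝ) else 0) - if j ≤ k then 1 else 0) := by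
      intro k l
      by_cases hkl : k < l
      · refine mul_nonneg (mul_nonneg (hU k l) (hnn _)) ?_
        by_cases hk : j ≤ k
        · simp [hk, hk.trans hkl.le]
        · rw [if_neg hk]; split_ifs <;> norm_num
      · simp [upper, hkl]
    have h2 : W i j * T ≤ ∑ k, ∑ l, upper W k l * trunc α ε (z l - z k) *
        ((if j ≤ l then (1:ℝ) else 0) - if j ≤ k then 1 else 0) := by
      refine le_trans ?_ (single_le_sum (f := fun k => ∑ l, upper W k l * trunc α ε (z l - z k) *
        ((if j ≤ l then (1:ℝ) else 0) - if j ≤ k then 1 else 0))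
        (fun k _ => sum_nonneg fun l _ => hterm k l) (mem_univ i))
      refine le_trans ?_ (single_le_sum (fun l _ => hterm i l) (mem_univ j))
      rw [upper, if_pos hij, trunc, max_eq_right hlt.le, hεT, if_pos le_rfl, if_neg hij.not_ge]
      simp
    have h3 : ∑ k, m k * z k * (if j ≤ k then (1:ℝ) else 0) ≤ B := by
      rw [hB, sum_mul]
      refine sum_le_sum fun k _ => ?_
      have hk : z k ≤ R := (le_abs_self _).trans ((hzi k).trans hzR)
      have hR0 : 0 ≤ R := (norm_nonneg z).trans hzR
      split_ifs
      · rw [mul_one]; exact mul_le_mul_of_nonneg_left hk (hm k).le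
      · rw [mul_zero]; exact mul_nonneg (hm k).le hR0
    linarith [hT i j hij.ne]
  refine ⟨z, fun i j hij => by linarith [hgap i j hij], fun v => ?_⟩
  rw [hz v]
  refine sum_congr rfl fun i _ => sum_congr rfl fun j _ => ?_
  by_cases hij : i < j
  · rw [trunc, max_eq_left (hgap i j hij)]
  · simp [upper, hij]

lemma unique_of_weak {n : ℕ} (hn : 2 ≤ n) (m : Fin n → ℝ) (hm : ∀ i, 0 < m i)
    {W : Fin n → Fin n → ℝ}
    (hW : ∀ i j, i ≠ j → 0 < W i j) {α : ℝ} (hα : α < -1) {z y : Fin n → ℝ}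
    (hz : StrictMono z) (hy : StrictMono y)
    (hz1 : ∑ i, m i * z i ^ 2 = 1) (hy1 : ∑ i, m i * y i ^ 2 = 1) {a b : ℝ}
    (ha : ∀ v : Fin n → ℝ, a * ∑ i, m i * z i * v i =
      ∑ i, ∑ j, upper W i j * (z j - z i) ^ (α + 1) * (v j - v i))
    (hb : ∀ v : Fin n → ℝ, b * ∑ i, m i * y i * v i =
      ∑ i, ∑ j, upper W i j * (y j - y i) ^ (α + 1) * (v j - v i)) : z = y := by
  have hU := upper_nonneg hW
  -- testing a solution against itself shows that its multiplier is positive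
  have hpos : ∀ (x : Fin n → ℝ) (c : ℝ), StrictMono x → ∑ i, m i * x i ^ 2 = 1 →
      (∀ v : Fin n → ℝ, c * ∑ i, m i * x i * v i =
        ∑ i, ∑ j, upper W i j * (x j - x i) ^ (α + 1) * (v j - v i)) → 0 < c := by
    intro x c hx hx1 hc
    have h1 := hc x
    have h2 : ∑ i, m i * x i * x i = 1 := by
      rw [← hx1]; exact sum_congr rfl fun i _ => by ring
    rw [h2, mul_one] at h1
    have hterm : ∀ i j, 0 ≤ upper W i j * (x j - x i) ^ (α + 1) * (x j - x i) := by
      intro i j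
      by_cases hij : i < j
      · have := sub_pos.2 (hx hij)
        exact mul_nonneg (mul_nonneg (hU i j) (Real.rpow_nonneg this.le _)) this.le
      · simp [upper, hij]
    rw [h1]
    have h01 : (⟨0, by omega⟩ : Fin n) < ⟨1, by omega⟩ := by simp [Fin.lt_def]
    refine sum_pos' (fun i _ => sum_nonneg fun j _ => hterm i j) ⟨⟨0, by omega⟩, mem_univ _, ?_⟩
    refine sum_pos' (fun j _ => hterm _ j) ⟨⟨1, by omega⟩, mem_univ _, ?_⟩
    have := sub_pos.2 (hx h01)
    rw [upper, if_pos h01]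
    exact mul_pos (mul_pos (hW _ _ h01.ne) (Real.rpow_pos_of_pos this _)) this
  have ha0 := hpos z a hz hz1 ha
  have hb0 := hpos y b hy hy1 hb
  have h1 := ha fun i => z i - y i
  have h2 := hb fun i => z i - y i
  have h3 : ∑ i, ∑ j, upper W i j * (z j - z i) ^ (α + 1) * ((z j - y j) - (z i - y i)) ≤
      ∑ i, ∑ j, upper W i j * (y j - y i) ^ (α + 1) * ((z j - y j) - (z i - y i)) := by
    refine sum_le_sum fun i _ => sum_le_sum fun j _ => ?_
    by_cases hij : i < j
    · rw [mul_assoc, mul_assoc]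
      refine mul_le_mul_of_nonneg_left ?_ (hU i j)
      have hzp := sub_pos.2 (hz hij)
      have hyp := sub_pos.2 (hy hij)
      rcases le_total (z j - z i) (y j - y i) with h | h
      · exact mul_le_mul_of_nonpos_right
          (Real.rpow_le_rpow_of_nonpos hzp h (by linarith)) (by linarith)
      · exact mul_le_mul_of_nonneg_right
          (Real.rpow_le_rpow_of_nonpos hyp h (by linarith)) (by linarith)
    · simp [upper, hij]
  set p : ℝ := ∑ i, m i * z i * y i with hp
  have e1 : ∑ i, m i * z i * (z i - y i) = 1 - p := by
    rw [hp, ← hz1, ← sum_sub_distrib]; exact sum_congr rfl fun i _ => by ring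
  have e2 : ∑ i, m i * y i * (z i - y i) = p - 1 := by
    rw [hp, ← hy1, ← sum_sub_distrib]; exact sum_congr rfl fun i _ => by ring
  have e3 : ∑ i, m i * (z i - y i) ^ 2 = 2 * (1 - p) := by
    have : ∑ i, m i * (z i - y i) ^ 2 =
        ∑ i, m i * z i * (z i - y i) - ∑ i, m i * y i * (z i - y i) := by
      rw [← sum_sub_distrib]; exact sum_congr rfl fun i _ => by ring
    rw [this, e1, e2]; ring
  have hnn : ∀ i ∈ univ, 0 ≤ m i * (z i - y i) ^ 2 :=
    fun i _ => mul_nonneg (hm i).le (sq_nonneg _)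
  have hp1 : 1 - p ≤ 0 := by
    rw [e1] at h1; rw [e2] at h2
    by_contra! hcon
    nlinarith [mul_pos ha0 hcon, mul_pos hb0 hcon]
  have hzero : ∑ i, m i * (z i - y i) ^ 2 = 0 :=
    le_antisymm (by linarith) (sum_nonneg hnn)
  funext i
  have := (sum_eq_zero_iff_of_nonneg hnn).1 hzero i (mem_univ i)
  rcases mul_eq_zero.1 this with h | h
  · exact absurd h (hm i).ne'
  · exact sub_eq_zero.1 (pow_eq_zero_iff two_ne_zero |>.1 h)

/-- The normalized collinear central configurations, without the distinctness of the coordinates. -/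
def Sol {n : ℕ} (m : Fin n → ℝ) (W : Fin n → Fin n → ℝ) (α : ℝ) (z : Fin n → ℝ) : Prop :=
  (∑ i, m i * z i = 0) ∧ (∑ i, m i * z i ^ 2 = 1) ∧
    ∃ lam : ℝ, lam ≠ 0 ∧ ∀ i, (m i)⁻¹ * force α W z i = lam * z i

lemma weak_iff {n : ℕ} (m : Fin n → ℝ) (hm : ∀ i, 0 < m i) {W : Fin n → Fin n → ℝ}
    (hsym : ∀ i j, i ≠ j → W i j = W j i) (α : ℝ) {z : Fin n → ℝ} (hz : StrictMono z) (lam : ℝ) :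
    (∀ i, (m i)⁻¹ * force α W z i = lam * z i) ↔
      ∀ v : Fin n → ℝ, lam * ∑ i, m i * z i * v i =
        ∑ i, ∑ j, upper W i j * (z j - z i) ^ (α + 1) * (v j - v i) := by
  have hiff : ∀ i, (m i)⁻¹ * force α W z i = lam * z i ↔ force α W z i = lam * (m i * z i) := by
    intro i
    rw [inv_mul_eq_iff_eq_mul₀ (hm i).ne']
    constructor <;> intro h <;> rw [h] <;> ring
  simp only [hiff, ← pairing_force hsym α hz]
  constructor
  · intro h v
    rw [mul_sum]
    exact sum_congr rfl fun i _ => by rw [h i]; ring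
  · intro h i
    have := h (Pi.single i 1)
    simpa [Pi.single_apply] using this.symm

lemma existsUnique_pos {n : ℕ} (hn : 2 ≤ n) (m : Fin n → ℝ) (hm : ∀ i, 0 < m i)
    {W : Fin n → Fin n → ℝ} (hsym : ∀ i j, i ≠ j → W i j = W j i)
    (hW : ∀ i j, i ≠ j → 0 < W i j) {α : ℝ} (hα : α < -1) :
    ∃! z : Fin n → ℝ, StrictMono z ∧ Sol m W α z := by
  apply existsUnique_of_exists_of_unique
  · obtain ⟨z, hz, hw⟩ := exists_weak m hm hW hα
    have hN : 0 < ∑ i, m i * z i ^ 2 := by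
      have h01 : (⟨0, by omega⟩ : Fin n) < ⟨1, by omega⟩ := by simp [Fin.lt_def]
      have hnn : ∀ i ∈ univ, 0 ≤ m i * z i ^ 2 := fun i _ => mul_nonneg (hm i).le (sq_nonneg _)
      refine (sum_nonneg hnn).lt_of_ne' fun h0 => ?_
      have h1 : ∀ i, z i = 0 := fun i => by
        have := (sum_eq_zero_iff_of_nonneg hnn).1 h0 i (mem_univ i)
        simpa [(hm i).ne'] using this
      exact (hz h01).ne (by rw [h1, h1])
    set c : ℝ := (Real.sqrt (∑ i, m i * z i ^ 2))⁻¹ with hc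
    have hc0 : 0 < c := inv_pos.2 (Real.sqrt_pos.2 hN)
    have hcz : StrictMono fun i => c * z i := fun i j h => mul_lt_mul_of_pos_left (hz h) hc0
    refine ⟨fun i => c * z i, hcz, ?_, ?_, c ^ α, (Real.rpow_pos_of_pos hc0 _).ne', ?_⟩
    · have h0 := hw fun _ => 1
      simp only [mul_one, sub_self, mul_zero, sum_const_zero] at h0
      have : ∑ i, m i * (c * z i) = c * ∑ i, m i * z i := by
        rw [mul_sum]; exact sum_congr rfl fun i _ => by ring
      rw [this, h0, mul_zero]
    · have : ∑ i, m i * (c * z i) ^ 2 = c ^ 2 * ∑ i, m i * z i ^ 2 := by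
        rw [mul_sum]; exact sum_congr rfl fun i _ => by ring
      rw [this, hc, inv_pow, Real.sq_sqrt hN.le, inv_mul_cancel₀ hN.ne']
    · rw [weak_iff m hm hsym α hcz]
      intro v
      have h1 : c ^ α * ∑ i, m i * (c * z i) * v i = c ^ (α + 1) * ∑ i, m i * z i * v i := by
        rw [Real.rpow_add_one hc0.ne', mul_assoc (c ^ α) c, mul_sum (a := c)]
        congr 1
        exact sum_congr rfl fun i _ => by ring
      rw [h1, hw v, mul_sum]
      refine sum_congr rfl fun i _ => ?_
      rw [mul_sum]
      refine sum_congr rfl fun j _ => ?_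
      by_cases hij : i < j
      · rw [← mul_sub, Real.mul_rpow hc0.le (sub_pos.2 (hz hij)).le]
        ring
      · simp [upper, hij]
  · rintro z y ⟨hz, -, hz1, a, -, ha⟩ ⟨hy, -, hy1, b, -, hb⟩
    exact unique_of_weak hn m hm hW hα hz hy hz1 hy1
      ((weak_iff m hm hsym α hz a).1 ha) ((weak_iff m hm hsym α hy b).1 hb)

lemma sol_neg {n : ℕ} (m : Fin n → ℝ) (W : Fin n → Fin n → ℝ) (α : ℝ) (z : Fin n → ℝ)
    (h : Sol m W α z) : Sol m (fun i j => -W i j) α z := by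
  obtain ⟨h1, h2, lam, hl, h3⟩ := h
  refine ⟨h1, h2, -lam, neg_ne_zero.2 hl, fun i => ?_⟩
  have : force α (fun i j => -W i j) z i = -force α W z i := by
    simp [force, neg_mul]
  rw [this, mul_neg, h3 i, neg_mul]

lemma existsUnique {n : ℕ} (hn : 2 ≤ n) (m : Fin n → ℝ) (hm : ∀ i, 0 < m i)
    {W : Fin n → Fin n → ℝ} (hsym : ∀ i j, i ≠ j → W i j = W j i)
    (hW : (∀ i j, i ≠ j → 0 < W i j) ∨ (∀ i j, i ≠ j → W i j < 0)) {α : ℝ} (hα : α < -1) :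
    ∃! z : Fin n → ℝ, StrictMono z ∧ Sol m W α z := by
  rcases hW with hW | hW
  · exact existsUnique_pos hn m hm hsym hW hα
  · have h := existsUnique_pos hn m hm (W := fun i j => -W i j)
      (fun i j hij => by rw [hsym i j hij]) (fun i j hij => neg_pos.2 (hW i j hij)) hα
    have hiff : ∀ z, Sol m W α z ↔ Sol m (fun i j => -W i j) α z := fun z =>
      ⟨sol_neg m W α z, fun hz => by simpa using sol_neg m _ α z hz⟩
    simpa only [hiff] using h

lemma sol_comp {n : ℕ} (m : Fin n → ℝ) (W : Fin n → Fin n → ℝ) (α : ℝ) (z : Fin n → ℝ)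
    (σ : Equiv.Perm (Fin n)) :
    Sol (m ∘ σ) (fun i j => W (σ i) (σ j)) α (z ∘ σ) ↔ Sol m W α z := by
  have hf : ∀ i, force α (fun i j => W (σ i) (σ j)) (z ∘ σ) i = force α W z (σ i) := by
    intro i
    simp only [force, sum_filter]
    rw [← Equiv.sum_comp σ
      (fun j => if j ≠ σ i then W (σ i) j * |z (σ i) - z j| ^ α * (z (σ i) - z j) else 0)]
    simp
  unfold Sol
  simp only [hf, Function.comp_apply]
  rw [Equiv.sum_comp σ (fun i => m i * z i), Equiv.sum_comp σ (fun i => m i * z i ^ 2)]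
  refine and_congr Iff.rfl (and_congr Iff.rfl (exists_congr fun lam => and_congr Iff.rfl ?_))
  exact σ.forall_congr_right (q := fun i => (m i)⁻¹ * force α W z i = lam * z i)

end Moulton

open Moulton in
/-- Generalized Moulton theorem, counting form: For `α < -1` and all
coefficients `m_{ij}` nonzero and of the same sign, the set of normalized collinear
central configurations has exactly `n!` elements (that is, `n!/2` configurations up
to the symmetry `z ↦ -z`). -/
theorem stmt11 (n : ℕ) (hn : 3 ≤ n) (m : Fin n → ℝ) (hm : ∀ i, 0 < m i)
    (M : Fin n → Fin n → ℝ) (hsym : ∀ i j, i ≠ j → M i j = M j i)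
    (α : ℝ) (hα : α < -1)
    (hM : (∀ i j, i ≠ j → 0 < M i j) ∨ (∀ i j, i ≠ j → M i j < 0))
    (S : Set (Fin n → ℝ))
    (hS : S = {z : Fin n → ℝ |
      (∀ i j, i ≠ j → z i ≠ z j) ∧
      (∑ i, m i * z i = 0) ∧
      (∑ i, m i * z i ^ 2 = 1) ∧
      ∃ lam : ℝ, lam ≠ 0 ∧ ∀ i,
        (m i)⁻¹ * ∑ j ∈ Finset.univ.filter (fun j => j ≠ i),
          M i j * |z i - z j| ^ α * (z i - z j) = lam * z i}) :
    S.Finite ∧ S.ncard = Nat.factorial n := by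
  have hmem : ∀ z, z ∈ S ↔ (∀ i j, i ≠ j → z i ≠ z j) ∧ Sol m M α z := by
    intro z; rw [hS]; rfl
  have hex : ∀ σ : Equiv.Perm (Fin n), ∃! z : Fin n → ℝ, StrictMono (z ∘ σ) ∧ Sol m M α z := by
    intro σ
    have hne : ∀ i j, i ≠ j → σ i ≠ σ j := fun i j h => σ.injective.ne h
    obtain ⟨y, ⟨hy, hyS⟩, huniq⟩ := existsUnique (by omega : 2 ≤ n) (m ∘ σ) (fun i => hm (σ i))
      (W := fun i j => M (σ i) (σ j)) (fun i j h => hsym _ _ (hne i j h))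
      (hM.imp (fun h i j hij => h _ _ (hne i j hij)) (fun h i j hij => h _ _ (hne i j hij))) hα
    have hyσ : (y ∘ σ.symm) ∘ σ = y := by funext i; simp
    refine ⟨y ∘ σ.symm, ⟨by rwa [hyσ], ?_⟩, ?_⟩
    · rw [← sol_comp m M α _ σ, hyσ]; exact hyS
    · rintro z ⟨hz, hzS⟩
      have := huniq (z ∘ σ) ⟨hz, (sol_comp m M α z σ).2 hzS⟩
      rw [← this]; funext i; simp
  choose f hf huniq using hex
  have hinj : Function.Injective f := by
    intro σ τ h
    have hτ := (hf τ).1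
    rw [← h] at hτ
    -- both arrangements enumerate the same set increasingly, so they agree
    have hcomp : f σ ∘ σ = f σ ∘ τ := ((hf σ).1.range_inj hτ).1 (by
      rw [σ.surjective.range_comp, τ.surjective.range_comp])
    have hfi : Function.Injective (f σ) := by
      have := (hf σ).1.injective.comp σ.symm.injective
      simpa [Function.comp_assoc] using this
    exact Equiv.ext fun i => hfi (congrFun hcomp i)
  have hrange : S = Set.range f := by
    ext z
    rw [hmem]
    constructor
    · rintro ⟨hd, hz⟩
      have hzi : Function.Injective z := fun i j h => by
        by_contra hij; exact hd i j hij h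
      exact ⟨Tuple.sort z, (huniq _ z
        ⟨(Tuple.monotone_sort z).strictMono_of_injective
          (hzi.comp (Tuple.sort z).injective), hz⟩).symm⟩
    · rintro ⟨σ, rfl⟩
      refine ⟨fun i j hij => ?_, (hf σ).2⟩
      have := (hf σ).1.injective.comp σ.symm.injective
      have hfi : Function.Injective (f σ) := by simpa [Function.comp_assoc] using this
      exact hfi.ne hij
  rw [hrange]
  refine ⟨Set.finite_range f, ?_⟩
  rw [← Set.image_univ, Set.ncard_image_of_injective _ hinj, Set.ncard_univ, Nat.card_perm,
    Nat.card_eq_fintype_card, Fintype.card_fin]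
end

section
/- Let n = 3 and α < −1. Suppose m_{23} = 0 while m_{12} and m_{13} are nonzero and have the same sign (m_{12} · m_{13} > 0). Then there exists at least one collinear central configuration: a point z ∈ ℝ³ with pairwise distinct coordinates, ∑_i m_i z_i = 0, and a real λ ≠ 0 with w_i(z) = λ z_i for all i. -/
/-!
Place body `1` strictly between bodies `2` and `3`, at distance `s` from the former and `1` from
the latter, with the centre of mass at the origin. Since `m₂₃ = 0` and the forces sum to zero, a
configuration is central as soon as `w₂ z₃ = w₃ z₂`. After division by `m₁₂` this reads
`((m₁ + m₃) s + m₃) m₂ c = (m₂ s + m₁ + m₂) m₃ s ^ (α + 1)` with `c = m₁₃ / m₁₂ > 0`. As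
`α + 1 < 0`, the right side dominates for small `s` and the left side for large `s`, so the
intermediate value theorem yields a solution (`exists_ratio`). The multiplier is then `w₃ / z₃`,
which is nonzero.
-/

/-- The equation for the ratio `s` of the two distances from the middle body. -/
lemma exists_ratio {m₁ m₂ m₃ c β : ℝ} (hm₁ : 0 < m₁) (hm₂ : 0 < m₂) (hm₃ : 0 < m₃)
    (hc : 0 < c) (hβ : β < 0) :
    ∃ s : ℝ, 0 < s ∧ ((m₁ + m₃) * s + m₃) * m₂ * c = (m₂ * s + m₁ + m₂) * m₃ * s ^ β := by
  have hpow : ∀ K : ℝ, 0 < K → (K ^ β⁻¹) ^ β = K := fun K hK =>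
    Real.rpow_inv_rpow hK.le hβ.ne
  have hγ : β⁻¹ ≤ 0 := (inv_lt_zero.2 hβ).le
  have hcont : ContinuousOn (fun s : ℝ => ((m₁ + m₃) * s + m₃) * m₂ * c
      - (m₂ * s + m₁ + m₂) * m₃ * s ^ β) (Set.Ioi 0) := by
    have h : ContinuousOn (fun s : ℝ => s ^ β) (Set.Ioi 0) := fun s hs =>
      (Real.continuousAt_rpow_const s β (Or.inl (ne_of_gt hs))).continuousWithinAt
    fun_prop
  -- A point `s ≤ 1` where `s ^ β` is so large that the difference is nonpositive.
  obtain ⟨a, ha, hfa⟩ : ∃ a : ℝ, 0 < a ∧ ((m₁ + m₃) * a + m₃) * m₂ * c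
      - (m₂ * a + m₁ + m₂) * m₃ * a ^ β ≤ 0 := by
    set q := (m₁ + 2 * m₃) * m₂ * c / ((m₁ + m₂) * m₃) with hq
    have hq0 : 0 < q := by positivity
    have hqe : q * ((m₁ + m₂) * m₃) = (m₁ + 2 * m₃) * m₂ * c := by
      rw [hq]; field_simp
    have hs0 : 0 < (1 + q) ^ β⁻¹ := by positivity
    have hs1 : (1 + q) ^ β⁻¹ ≤ 1 := Real.rpow_le_one_of_one_le_of_nonpos (by linarith) hγ
    refine ⟨(1 + q) ^ β⁻¹, hs0, ?_⟩
    rw [hpow _ (by linarith)]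
    generalize (1 + q) ^ β⁻¹ = s at hs0 hs1
    have h1 : (m₁ + m₃) * m₂ * c * s ≤ (m₁ + m₃) * m₂ * c :=
      mul_le_of_le_one_right (by positivity) hs1
    have h2 : 0 < m₂ * s * m₃ * (1 + q) := by positivity
    have h3 : 0 < (m₁ + m₂) * m₃ := by positivity
    linarith
  -- A point `s ≥ 1` where `s ^ β` is so small that the difference is nonnegative.
  obtain ⟨b, hb, hfb⟩ : ∃ b : ℝ, 0 < b ∧ 0 ≤ ((m₁ + m₃) * b + m₃) * m₂ * c
      - (m₂ * b + m₁ + m₂) * m₃ * b ^ β := by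
    set q := (m₁ + m₃) * m₂ * c / ((m₁ + 2 * m₂) * m₃) with hq
    have hq0 : 0 < q := by positivity
    have hqe : q * ((m₁ + 2 * m₂) * m₃) = (m₁ + m₃) * m₂ * c := by
      rw [hq]; field_simp
    have hK0 : 0 < min 1 q := lt_min one_pos hq0
    have hs1 : 1 ≤ (min 1 q) ^ β⁻¹ :=
      Real.one_le_rpow_of_pos_of_le_one_of_nonpos hK0 (min_le_left _ _) hγ
    refine ⟨(min 1 q) ^ β⁻¹, by positivity, ?_⟩
    rw [hpow _ hK0]
    generalize (min 1 q) ^ β⁻¹ = s at hs1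
    have hs0 : 0 < s := by linarith
    have h1 : (m₂ * s + m₁ + m₂) * m₃ * min 1 q ≤ ((m₁ + 2 * m₂) * s) * m₃ * q := by
      gcongr
      · nlinarith
      · exact min_le_right _ _
    have h2 : ((m₁ + 2 * m₂) * s) * m₃ * q = (m₁ + m₃) * m₂ * c * s := by
      rw [← hqe]; ring
    have h3 : 0 < m₃ * m₂ * c := by positivity
    linarith
  obtain ⟨s, hs, hfs⟩ := isPreconnected_Ioi.intermediate_value
    (Set.mem_Ioi.2 ha) (Set.mem_Ioi.2 hb) hcont ⟨hfa, hfb⟩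
  exact ⟨s, hs, sub_eq_zero.1 hfs⟩


/-- For `n = 3`, `α < -1`, `m₂₃ = 0` and `m₁₂, m₁₃` nonzero of the same
sign, there exists at least one collinear central configuration. -/
theorem stmt18 (m₁ m₂ m₃ : ℝ) (hm₁ : 0 < m₁) (hm₂ : 0 < m₂) (hm₃ : 0 < m₃)
    (m₁₂ m₁₃ m₂₃ : ℝ) (α : ℝ) (hα : α < -1)
    (h23 : m₂₃ = 0) (hsame : 0 < m₁₂ * m₁₃) :
    ∃ z₁ z₂ z₃ : ℝ, z₁ ≠ z₂ ∧ z₁ ≠ z₃ ∧ z₂ ≠ z₃ ∧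
      m₁ * z₁ + m₂ * z₂ + m₃ * z₃ = 0 ∧
      ∃ lam : ℝ, lam ≠ 0 ∧
        lam * z₁ = m₁⁻¹ * (m₁₂ * |z₁ - z₂| ^ α * (z₁ - z₂) + m₁₃ * |z₁ - z₃| ^ α * (z₁ - z₃)) ∧
        lam * z₂ = m₂⁻¹ * (m₁₂ * |z₂ - z₁| ^ α * (z₂ - z₁) + m₂₃ * |z₂ - z₃| ^ α * (z₂ - z₃)) ∧
        lam * z₃ = m₃⁻¹ * (m₁₃ * |z₃ - z₁| ^ α * (z₃ - z₁) + m₂₃ * |z₃ - z₂| ^ α * (z₃ - z₂)) := by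
  subst h23
  have h12 : m₁₂ ≠ 0 := left_ne_zero_of_mul hsame.ne'
  have h13 : m₁₃ ≠ 0 := right_ne_zero_of_mul hsame.ne'
  have hc : 0 < m₁₃ / m₁₂ := by
    have : m₁₃ / m₁₂ = m₁₂ * m₁₃ / m₁₂ ^ 2 := by field_simp
    rw [this]; positivity
  obtain ⟨s, hs, he⟩ := exists_ratio hm₁ hm₂ hm₃ hc (show α + 1 < 0 by linarith)
  rw [Real.rpow_add_one hs.ne'] at he
  have hM : 0 < m₁ + m₂ + m₃ := by positivity
  have hz : 0 < m₂ * s + m₁ + m₂ := by positivity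
  have heq : ((m₁ + m₃) * s + m₃) * m₂ * m₁₃ = (m₂ * s + m₁ + m₂) * m₃ * (s ^ α * s) * m₁₂ := by
    rw [← he]; field_simp
  set x := (m₂ * s - m₃) / (m₁ + m₂ + m₃) with hx
  have hxe : x * (m₁ + m₂ + m₃) = m₂ * s - m₃ := by rw [hx]; field_simp
  have e12 : |x - (x - s)| = s := by rw [sub_sub_cancel, abs_of_pos hs]
  have e21 : |x - s - x| = s := by rw [abs_sub_comm, e12]
  have e13 : |x - (x + 1)| = 1 := by simp
  have e31 : |x + 1 - x| = 1 := by simp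
  have hz3 : x + 1 = (m₂ * s + m₁ + m₂) / (m₁ + m₂ + m₃) := by rw [hx]; field_simp; ring
  have hz2 : x - s = -((m₁ + m₃) * s + m₃) / (m₁ + m₂ + m₃) := by rw [hx]; field_simp; ring
  have hz3pos : 0 < x + 1 := by rw [hz3]; positivity
  -- The multiplier is `w₃ / z₃`, so the third equation holds by definition.
  obtain ⟨l, hl, hl3⟩ : ∃ l : ℝ, l ≠ 0 ∧ l * (x + 1) = m₃⁻¹ * m₁₃ :=
    ⟨m₃⁻¹ * m₁₃ / (x + 1), by positivity, by field_simp⟩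
  have hl2 : l * (x - s) = m₂⁻¹ * (m₁₂ * s ^ α * (-s)) := by
    have hle : l = m₃⁻¹ * m₁₃ / (x + 1) := by rw [eq_div_iff hz3pos.ne', hl3]
    rw [hle, hz3, hz2]
    field_simp
    linear_combination -heq
  -- The forces sum to zero and the centre of mass is at the origin, which gives the first equation.
  have hl1 : l * x = m₁⁻¹ * (m₁₂ * s ^ α * s - m₁₃) := by
    have k2 : m₂ * (l * (x - s)) = m₁₂ * s ^ α * (-s) := by rw [hl2]; field_simp
    have k3 : m₃ * (l * (x + 1)) = m₁₃ := by rw [hl3]; field_simp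
    rw [eq_inv_mul_iff_mul_eq₀ hm₁.ne']
    linear_combination l * hxe - k2 - k3
  refine ⟨x, x - s, x + 1, by linarith, by linarith, by linarith, by linarith, l, hl, ?_, ?_, ?_⟩
  · rw [e12, e13, Real.one_rpow, hl1]; ring
  · rw [e21, hl2]; ring
  · rw [e31, Real.one_rpow, hl3]; ring
end

section
/- Let m ≥ 1, let z₁ < z₂ < … < z_m be real numbers and let c > 0. Then the function g(x) = c · ∑_{j=1}^m (x − z_j)⁻¹, defined on ℝ ∖ {z₁,…,z_m}, has exactly one fixed point in each of the m+1 connected components of ℝ ∖ {z₁,…,z_m} (the m−1 bounded open intervals (z_j, z_{j+1}) and the two unbounded intervals (−∞, z₁) and (z_m, +∞)). -/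
/-!
Put `f x = x - c ∑ⱼ (x - zⱼ)⁻¹`; fixed points of `g` are the zeros of `f`. On an interval without
poles each `(x - zⱼ)⁻¹` is decreasing, so `f` is strictly increasing there and has at most one zero.
A zero exists by the intermediate value theorem, because `f` tends to `-∞` at the left end of each
component (a pole approached from the right, or `-∞`) and to `+∞` at its right end (a pole
approached from the left, or `+∞`).
-/

open Filter Topology

/-- Uniqueness comes from monotonicity on a pole-free interval `S`, existence from the limits of
`x - c ∑ⱼ (x - zⱼ)⁻¹` along filters `l₁`, `l₂` supported on `S`. -/
lemma existsUnique_fixed {m : ℕ} (z : Fin m → ℝ) {c : ℝ} (hc : 0 < c) {S : Set ℝ}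
    (hS : S.OrdConnected) (hpole : ∀ j, z j ∉ S) {l₁ l₂ : Filter ℝ} [NeBot l₁] [NeBot l₂]
    (h₁ : l₁ ≤ 𝓟 S) (h₂ : l₂ ≤ 𝓟 S)
    (t₁ : Tendsto (fun x => x - c * ∑ j, (x - z j)⁻¹) l₁ atBot)
    (t₂ : Tendsto (fun x => x - c * ∑ j, (x - z j)⁻¹) l₂ atTop) :
    ∃! x : ℝ, x ∈ S ∧ c * ∑ j, (x - z j)⁻¹ = x := by
  have hcont : ContinuousOn (fun x => x - c * ∑ j, (x - z j)⁻¹) S := by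
    refine continuousOn_id.sub (continuousOn_const.mul (continuousOn_finsetSum _ fun j _ => ?_))
    refine (continuousOn_id.sub continuousOn_const).inv₀ fun x hx h => hpole j ?_
    rwa [← show x = z j from sub_eq_zero.mp h]
  have hmono : ∀ x ∈ S, ∀ y ∈ S, x < y → c * ∑ j, (y - z j)⁻¹ ≤ c * ∑ j, (x - z j)⁻¹ := by
    intro x hx y hy hxy
    refine mul_le_mul_of_nonneg_left (Finset.sum_le_sum fun j _ => ?_) hc.le
    -- By order-connectedness, `z j` lies outside `[x, y]`.
    rcases lt_or_ge (z j) x with h | h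
    · exact inv_anti₀ (by linarith) (by linarith)
    · have hy' : y < z j := by
        by_contra! h'
        exact hpole j (hS.out hx hy ⟨h, h'⟩)
      exact (inv_le_inv_of_neg (by linarith) (by linarith)).mpr (by linarith)
  obtain ⟨x, hx, hx0⟩ :=
    hS.isPreconnected.intermediate_value_Iii h₁ h₂ hcont t₁ t₂ (Set.mem_univ (0 : ℝ))
  refine ⟨x, ⟨hx, (sub_eq_zero.mp hx0).symm⟩, ?_⟩
  rintro y ⟨hy, hyf⟩
  have hxf := (sub_eq_zero.mp hx0).symm
  rcases lt_trichotomy x y with h | h | h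
  · have := hmono x hx y hy h
    linarith
  · exact h.symm
  · have := hmono y hy x hx h
    linarith

/-- Isolating the singular term: away from it the function is continuous at the pole `z k`. -/
lemma exists_pole_split {m : ℕ} (z : Fin m → ℝ) (hz : StrictMono z) (c : ℝ) (k : Fin m) :
    ∃ r : ℝ → ℝ, ContinuousAt r (z k) ∧
      (fun x => x - c * ∑ j, (x - z j)⁻¹) = fun x => r x + -(c * (x - z k)⁻¹) := by
  refine ⟨fun x => x - c * ∑ j ∈ Finset.univ.erase k, (x - z j)⁻¹, ?_, ?_⟩
  · refine continuousAt_id.sub (continuousAt_const.mul (tendsto_finsetSum _ fun j hj => ?_))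
    refine (continuousAt_id.sub continuousAt_const).inv₀ ?_
    exact sub_ne_zero.mpr fun h => Finset.ne_of_mem_erase hj (hz.injective h).symm
  · funext x
    rw [← Finset.add_sum_erase Finset.univ _ (Finset.mem_univ k)]
    ring

lemma tendsto_pole_right {m : ℕ} (z : Fin m → ℝ) (hz : StrictMono z) {c : ℝ} (hc : 0 < c)
    (k : Fin m) :
    Tendsto (fun x => x - c * ∑ j, (x - z j)⁻¹) (𝓝[>] (z k)) atBot := by
  obtain ⟨r, hr, h⟩ := exists_pole_split z hz c k
  rw [h]
  refine (hr.tendsto.mono_left nhdsWithin_le_nhds).add_atBot (tendsto_neg_atTop_atBot.comp ?_)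
  refine Tendsto.const_mul_atTop hc (tendsto_inv_nhdsGT_zero.comp ?_)
  refine tendsto_nhdsWithin_iff.mpr ⟨?_, ?_⟩
  · have : ContinuousAt (fun x => x - z k) (z k) := by fun_prop
    simpa using this.tendsto.mono_left nhdsWithin_le_nhds
  · filter_upwards [self_mem_nhdsWithin] with x hx
    exact sub_pos.mpr (Set.mem_Ioi.mp hx)

lemma tendsto_pole_left {m : ℕ} (z : Fin m → ℝ) (hz : StrictMono z) {c : ℝ} (hc : 0 < c)
    (k : Fin m) :
    Tendsto (fun x => x - c * ∑ j, (x - z j)⁻¹) (𝓝[<] (z k)) atTop := by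
  obtain ⟨r, hr, h⟩ := exists_pole_split z hz c k
  rw [h]
  refine (hr.tendsto.mono_left nhdsWithin_le_nhds).add_atTop (tendsto_neg_atBot_atTop.comp ?_)
  refine Tendsto.const_mul_atBot hc (tendsto_inv_nhdsLT_zero.comp ?_)
  refine tendsto_nhdsWithin_iff.mpr ⟨?_, ?_⟩
  · have : ContinuousAt (fun x => x - z k) (z k) := by fun_prop
    simpa using this.tendsto.mono_left nhdsWithin_le_nhds
  · filter_upwards [self_mem_nhdsWithin] with x hx
    exact sub_neg.mpr (Set.mem_Iio.mp hx)

lemma tendsto_sum_atTop {m : ℕ} (z : Fin m → ℝ) (c : ℝ) :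
    Tendsto (fun x => x - c * ∑ j, (x - z j)⁻¹) atTop atTop := by
  have : Tendsto (fun x => -(c * ∑ j, (x - z j)⁻¹)) atTop (𝓝 (-(c * ∑ _j : Fin m, (0 : ℝ)))) :=
    ((tendsto_finsetSum _ fun j _ => tendsto_inv_atTop_zero.comp
      (tendsto_atTop_add_const_right _ (-z j) tendsto_id)).const_mul c).neg
  simpa only [sub_eq_add_neg, id] using tendsto_id.atTop_add this

lemma tendsto_sum_atBot {m : ℕ} (z : Fin m → ℝ) (c : ℝ) :
    Tendsto (fun x => x - c * ∑ j, (x - z j)⁻¹) atBot atBot := by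
  have : Tendsto (fun x => -(c * ∑ j, (x - z j)⁻¹)) atBot (𝓝 (-(c * ∑ _j : Fin m, (0 : ℝ)))) :=
    ((tendsto_finsetSum _ fun j _ => tendsto_inv_atBot_zero.comp
      (tendsto_atBot_add_const_right _ (-z j) tendsto_id)).const_mul c).neg
  simpa only [sub_eq_add_neg, id] using tendsto_id.atBot_add this

/-- For `z₁ < … < z_m` real and `c > 0`, the map
`g(x) = c ∑ⱼ (x - zⱼ)⁻¹` has exactly one fixed point in each of the `m + 1`
connected components of `ℝ ∖ {z₁, …, z_m}`: the interval `(-∞, z₁)`, the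
bounded intervals `(zⱼ, z_{j+1})`, and the interval `(z_m, +∞)`. -/
theorem stmt19 (m : ℕ) (hm : 1 ≤ m) (z : Fin m → ℝ) (hz : StrictMono z)
    (c : ℝ) (hc : 0 < c)
    (g : ℝ → ℝ) (hg : ∀ x, g x = c * ∑ j, (x - z j)⁻¹) :
    (∃! x : ℝ, x ∈ Set.Iio (z ⟨0, by omega⟩) ∧ g x = x) ∧
    (∀ j : ℕ, ∀ h : j + 1 < m,
      ∃! x : ℝ, x ∈ Set.Ioo (z ⟨j, by omega⟩) (z ⟨j + 1, h⟩) ∧ g x = x) ∧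
    (∃! x : ℝ, x ∈ Set.Ioi (z ⟨m - 1, by omega⟩) ∧ g x = x) := by
  obtain rfl : g = fun x => c * ∑ j, (x - z j)⁻¹ := funext hg
  have hm0 : 0 < m := by omega
  have hm1 : m - 1 < m := by omega
  refine ⟨?_, fun j h => ?_, ?_⟩
  · refine existsUnique_fixed z hc Set.ordConnected_Iio (fun j hj => ?_) (l₁ := atBot)
      (l₂ := 𝓝[<] (z ⟨0, hm0⟩)) (le_principal_iff.mpr (Iio_mem_atBot _))
      (le_principal_iff.mpr self_mem_nhdsWithin) (tendsto_sum_atBot z c)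
      (tendsto_pole_left z hz hc _)
    have := hz.lt_iff_lt.mp (Set.mem_Iio.mp hj)
    simp [Fin.lt_def] at this
  · have hj : j < m := by omega
    have hlt : z ⟨j, hj⟩ < z ⟨j + 1, h⟩ := hz (by simp [Fin.lt_def])
    refine existsUnique_fixed z hc Set.ordConnected_Ioo (fun k hk => ?_)
      (l₁ := 𝓝[>] (z ⟨j, hj⟩)) (l₂ := 𝓝[<] (z ⟨j + 1, h⟩))
      (le_principal_iff.mpr (Ioo_mem_nhdsGT hlt)) (le_principal_iff.mpr (Ioo_mem_nhdsLT hlt))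
      (tendsto_pole_right z hz hc _) (tendsto_pole_left z hz hc _)
    have h1 := hz.lt_iff_lt.mp hk.1
    have h2 := hz.lt_iff_lt.mp hk.2
    simp only [Fin.lt_def] at h1 h2
    omega
  · refine existsUnique_fixed z hc Set.ordConnected_Ioi (fun j hj => ?_)
      (l₁ := 𝓝[>] (z ⟨m - 1, hm1⟩)) (l₂ := atTop)
      (le_principal_iff.mpr self_mem_nhdsWithin) (le_principal_iff.mpr (Ioi_mem_atTop _))
      (tendsto_pole_right z hz hc _) (tendsto_sum_atTop z c)
    have := hz.lt_iff_lt.mp (Set.mem_Ioi.mp hj)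
    simp only [Fin.lt_def] at this
    omega
end
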